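/- Let (T,f) be a Hubbard tree and let z₁ be a characteristic periodic point with itinerary τ and exact period n. If n occurs in the internal address of τ, then the first return map f^n of z₁ sends the local arm at z₁ pointing toward c₀ to the local arm pointing toward c₁, and it permutes all local arms at z₁ transitively in a single cycle. If n does not occur in the internal address of τ, then f^n fixes the local arm at z₁ pointing toward c₀ and permutes all other local arms at z₁ transitively in a single cycle. In particular, a characteristic periodic branch point of period n is evil if and only if the internal address of its itinerary does not contain n. -/

import Mathlib

/- Common definitions for formalizing "Admissibility of kneading sequences and
structure of Hubbard trees for quadratic polynomials" by Bruin–Schleicher. -/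

namespace HubbardTrees

/-- The symbols `0`, `1`, `*` used for itineraries and kneading sequences. -/
inductive Sym : Type
  | zero : Sym
  | one : Sym
  | star : Sym
deriving DecidableEq

/-- `A` is an arc in `X` joining `x` and `y` (a point if `x = y`, otherwise a
homeomorphic image of `[0,1]` with endpoints `x` and `y`). -/
def IsArcBetween {X : Type*} [TopologicalSpace X] (A : Set X) (x y : X) : Prop :=
  (x = y ∧ A = {x}) ∨
  (x ≠ y ∧ ∃ γ : Path x y, Topology.IsEmbedding ⇑γ ∧ Set.range ⇑γ = A)

/-- The global arms at `x`: the connected components of `X \ {x}`. -/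
def arms {X : Type*} [TopologicalSpace X] (x : X) : Set (Set X) :=
  {C | ∃ y, y ≠ x ∧ C = connectedComponentIn {x}ᶜ y}

/-- The global arm at `x` containing `y` (for `y ≠ x`): the component of `X \ {x}`
containing `y`.  Local arms at `x` being germs of global arms, we represent the local
arm at `x` pointing towards `y` by this set. -/
def armTo {X : Type*} [TopologicalSpace X] (x y : X) : Set X :=
  connectedComponentIn {x}ᶜ y

/-- `x` is an endpoint: it has exactly one arm. -/
def IsEndpoint {X : Type*} [TopologicalSpace X] (x : X) : Prop :=
  (arms x).ncard = 1

/-- `x` is a branch point: it has at least three arms. -/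
def IsBranchPt {X : Type*} [TopologicalSpace X] (x : X) : Prop :=
  3 ≤ (arms x).ncard

/-- `f` maps the set `A` homeomorphically onto its image. -/
def MapsHomeoOn {X : Type*} [TopologicalSpace X] (f : X → X) (A : Set X) : Prop :=
  Topology.IsEmbedding (A.restrict f)

/-- `f` is a local homeomorphism onto its image at `x`. -/
def IsLocalHomeoAt {X : Type*} [TopologicalSpace X] (f : X → X) (x : X) : Prop :=
  ∃ U : Set X, IsOpen U ∧ x ∈ U ∧ Topology.IsEmbedding (U.restrict f)

/-- `g` sends the local arm at `x` represented by the global arm `C` to the local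
arm at `g x` represented by `C'` (germ condition: some initial piece of `C` at `x`
is mapped into `C'`). -/
def MapsLocalArm {X : Type*} [TopologicalSpace X] (g : X → X) (x : X) (C C' : Set X) : Prop :=
  C ∈ arms x ∧ C' ∈ arms (g x) ∧ ∃ U ∈ nhds x, g '' (C ∩ U) ⊆ C'

/-- `z` is periodic under `f` with exact period `n`. -/
def ExactPeriod {Y : Type*} (f : Y → Y) (z : Y) (n : ℕ) : Prop :=
  1 ≤ n ∧ f^[n] z = z ∧ ∀ k, 1 ≤ k → k < n → f^[k] z ≠ z

/-- The first return map `f^[n]` of the fixed point `z` of `f^[n]` permutes all the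
local arms at `z` transitively in a single cycle. -/
def ArmsTransitive {X : Type*} [TopologicalSpace X] (f : X → X) (n : ℕ) (z : X) : Prop :=
  ∀ C ∈ arms z, ∀ C' ∈ arms z, ∃ j : ℕ, MapsLocalArm (f^[n * j]) z C C'

/-- An (abstract) Hubbard tree: a finite topological tree `X` together with a
continuous surjection `f` and a critical point `c0`, subject to the axioms of
Bruin–Schleicher. -/
structure HubbardTree (X : Type*) [TopologicalSpace X] : Type _ where
  /-- the dynamics -/
  f : X → X
  /-- the critical point -/
  c0 : X
  compact : CompactSpace X
  t2 : T2Space X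
  conn : ConnectedSpace X
  /-- the unique arc `[x,y]` joining two points -/
  arc : X → X → Set X
  arc_isArc : ∀ x y : X, IsArcBetween (arc x y) x y
  arc_unique : ∀ (x y : X) (A : Set X), IsArcBetween A x y → A = arc x y
  -- finiteness of the tree
  arms_finite : ∀ x : X, (arms x).Finite
  branch_finite : Set.Finite {x : X | IsBranchPt x}
  endpoint_finite : Set.Finite {x : X | IsEndpoint x}
  cont : Continuous f
  surj : Function.Surjective f
  /-- every point has at most two inverse images -/
  two_preimages : ∀ y : X, ∃ a b : X, f ⁻¹' {y} ⊆ {a, b}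
  /-- local homeomorphism onto its image away from the critical point -/
  local_homeo : ∀ x : X, x ≠ c0 → IsLocalHomeoAt f x
  /-- all endpoints lie on the critical orbit -/
  endpoints_on_orbit : ∀ x : X, IsEndpoint x → ∃ k : ℕ, f^[k] c0 = x
  /-- the critical point is periodic or preperiodic -/
  crit_preperiodic : ∃ k n : ℕ, 1 ≤ n ∧ f^[k + n] c0 = f^[k] c0
  /-- the critical point is not fixed -/
  crit_not_fixed : f c0 ≠ c0
  /-- expansivity -/
  expansive : ∀ x y : X, x ≠ y →
    (IsBranchPt x ∨ ∃ k : ℕ, f^[k] c0 = x) →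
    (IsBranchPt y ∨ ∃ k : ℕ, f^[k] c0 = y) →
    ∃ n : ℕ, c0 ∈ f^[n] '' (arc x y)

namespace HubbardTree

variable {X : Type*} [TopologicalSpace X] (H : HubbardTree X)

/-- The critical value `c₁ = f(c₀)`. -/
def c1 : X := H.f H.c0

/-- The component `T₁` of `T \ {c₀}` containing the critical value. -/
def T1 : Set X := connectedComponentIn {H.c0}ᶜ H.c1

open Classical in
/-- The symbol (`0`, `1` or `*`) attached to a point of the tree. -/
noncomputable def symOf (x : X) : Sym :=
  if x = H.c0 then Sym.star else if x ∈ H.T1 then Sym.one else Sym.zero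

/-- The itinerary of `x`: a sequence of symbols, 1-indexed (the value at index `0`
is irrelevant); entry `k ≥ 1` is the symbol of `f^[k-1] x`. -/
noncomputable def itin (x : X) : ℕ → Sym :=
  fun k => H.symOf (H.f^[k - 1] x)

/-- The kneading sequence: the itinerary of the critical value (1-indexed). -/
noncomputable def kneading : ℕ → Sym := H.itin H.c1

/-- `z` is the characteristic point of its periodic orbit: `c₁` lies in one
component of `X \ {z}` while `c₀` and all other points of the orbit lie in a
different component. -/
def IsCharacteristic (z : X) : Prop :=
  ∃ Cv Cz : Set X, Cv ∈ arms z ∧ Cz ∈ arms z ∧ Cv ≠ Cz ∧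
    H.c1 ∈ Cv ∧ H.c0 ∈ Cz ∧ ∀ k : ℕ, H.f^[k] z ≠ z → H.f^[k] z ∈ Cz

/-- The first return map fixes the local arm at `z` pointing to the critical point
and permutes all other local arms transitively in a single cycle. -/
def OtherArmsTransitive (n : ℕ) (z : X) : Prop :=
  ∀ C ∈ arms z, C ≠ armTo z H.c0 → ∀ C' ∈ arms z, C' ≠ armTo z H.c0 →
    ∃ j : ℕ, MapsLocalArm (H.f^[n * j]) z C C'

/-- `z` is the characteristic point of an evil periodic orbit of branch points of
exact period `n`. -/
def IsEvilOrbit (z : X) (n : ℕ) : Prop :=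
  ExactPeriod H.f z n ∧ (∀ k : ℕ, IsBranchPt (H.f^[k] z)) ∧
    H.IsCharacteristic z ∧ ¬ ArmsTransitive H.f n z

/-- `x` is precritical with `Step(x) = k`: `k ≥ 1` is minimal with `f^[k] x = c₁`. -/
def Step (x : X) (k : ℕ) : Prop :=
  1 ≤ k ∧ H.f^[k] x = H.c1 ∧ ∀ j, 1 ≤ j → j < k → H.f^[j] x ≠ H.c1

/-- `x` is the closest precritical point `ζ_k`. -/
def IsClosestPrecritical (x : X) (k : ℕ) : Prop :=
  H.Step x k ∧ ∀ j, 1 ≤ j → j < k → H.c1 ∉ H.f^[j] '' (H.arc H.c1 x)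

/-- `x` is the earliest precritical point on the set `A`, with `Step(x) = k`:
it is a precritical point on `A` of minimal Step. -/
def IsEarliestPrecriticalOn (A : Set X) (x : X) (k : ℕ) : Prop :=
  x ∈ A ∧ H.Step x k ∧ ∀ y ∈ A, ∀ j : ℕ, H.Step y j → k ≤ j

/-- Marked points: branch points and points of the critical orbit. -/
def MarkedPt (x : X) : Prop :=
  IsBranchPt x ∨ ∃ k : ℕ, H.f^[k] H.c0 = x

/-- Two marked points are joined by an edge if the arc between them contains no
further marked point. -/
def IsEdge (x y : X) : Prop :=
  H.MarkedPt x ∧ H.MarkedPt y ∧ x ≠ y ∧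
    ∀ w ∈ H.arc x y, H.MarkedPt w → w = x ∨ w = y

/-- Equivalence of Hubbard trees: a bijection between the marked points which
conjugates the dynamics and preserves edges. -/
def Equivalent {Y : Type*} [TopologicalSpace Y] (H' : HubbardTree Y) : Prop :=
  ∃ φ : X → Y,
    (∀ x : X, H.MarkedPt x → H'.MarkedPt (φ x)) ∧
    (∀ x x' : X, H.MarkedPt x → H.MarkedPt x' → φ x = φ x' → x = x') ∧
    (∀ y : Y, H'.MarkedPt y → ∃ x : X, H.MarkedPt x ∧ φ x = y) ∧
    φ H.c0 = H'.c0 ∧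
    (∀ x : X, H.MarkedPt x → φ (H.f x) = H'.f (φ x)) ∧
    (∀ x x' : X, H.MarkedPt x → H.MarkedPt x' →
      (H.IsEdge x x' ↔ H'.IsEdge (φ x) (φ x')))

end HubbardTree

/-! ### Combinatorics of kneading sequences -/

/-- The function `ρ_ν(n) = inf { k > n : ν_k ≠ ν_{k-n} } ∈ ℕ ∪ {∞}` (sequences are
1-indexed). -/
noncomputable def rho (ν : ℕ → Sym) (n : ℕ) : ℕ∞ :=
  sInf {e : ℕ∞ | ∃ j : ℕ, e = (j : ℕ∞) ∧ n < j ∧ ν j ≠ ν (j - n)}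

/-- `RhoOrbit ν k m` means that `m` belongs to the `ρ`-orbit
`k → ρ(k) → ρ(ρ(k)) → ⋯` of `k` (stopped before reaching `∞`). -/
inductive RhoOrbit (ν : ℕ → Sym) : ℕ → ℕ → Prop
  | refl (k : ℕ) : RhoOrbit ν k k
  | step {k m j : ℕ} : RhoOrbit ν k m → rho ν m = (j : ℕ∞) → RhoOrbit ν k j

/-- `m` occurs in the internal address `1 → ρ(1) → ρ(ρ(1)) → ⋯` of `ν`. -/
def InternalAddress (ν : ℕ → Sym) (m : ℕ) : Prop := RhoOrbit ν 1 m

/-- `ν` is a `*`-periodic kneading sequence of (exact) period `n`: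
`ν = overline(1 ν₂ … ν_{n-1} *)`. -/
def StarPeriodic (ν : ℕ → Sym) (n : ℕ) : Prop :=
  2 ≤ n ∧ ν 1 = Sym.one ∧ ν n = Sym.star ∧
    (∀ k, 1 ≤ k → ν (k + n) = ν k) ∧
    (∀ k, 1 ≤ k → k < n → ν k ≠ Sym.star)

/-- `ν` fails the admissibility condition for period `m`. -/
def FailsAdmissibility (ν : ℕ → Sym) (m : ℕ) : Prop :=
  1 ≤ m ∧
  ¬ InternalAddress ν m ∧
  (∀ k : ℕ, k ∣ m → 1 ≤ k → k < m → rho ν k ≤ (m : ℕ∞)) ∧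
  ∃ R r : ℕ, rho ν m = (R : ℕ∞) ∧ 1 ≤ r ∧ r ≤ m ∧ r ≡ R [MOD m] ∧ RhoOrbit ν r m

open Classical in
/-- The number `q(m)` of arms predicted by the kneading sequence, where
`ρ(m) = R < ∞` and `r ∈ {1,…,m}` is congruent to `R` modulo `m`. -/
noncomputable def qArms (ν : ℕ → Sym) (m R r : ℕ) : ℕ :=
  if RhoOrbit ν r m then (R - r) / m + 1 else (R - r) / m + 2


/-! ### Embeddings into the plane and cyclic order of arms -/

/-- Three points in the plane are in (strictly) counterclockwise position. -/
def Ccw (p q r : ℝ × ℝ) : Prop :=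
  0 < (q.1 - p.1) * (r.2 - p.2) - (q.2 - p.2) * (r.1 - p.1)

namespace HubbardTree

variable {X : Type*} [TopologicalSpace X] (H : HubbardTree X)

/-- Under an embedding `φ` of the tree into the plane, `p` is a first exit point of
the arm `C` at `x` through the circle of radius `ε` around `φ x`: `p = φ y` for a
point `y ∈ C` at distance exactly `ε`, such that the arc from `x` to `y` stays
within distance `< ε` before reaching `y`. -/
def ExitPt (φ : X → ℝ × ℝ) (x : X) (C : Set X) (ε : ℝ) (p : ℝ × ℝ) : Prop :=
  ∃ y ∈ C, φ y = p ∧ dist (φ x) p = ε ∧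
    ∀ z ∈ H.arc x y, z ≠ y → dist (φ x) (φ z) < ε

/-- The local arms at `x` represented by the arms `C, C', C''` are in
counterclockwise cyclic order under the embedding `φ`. -/
def ArmsCcw (φ : X → ℝ × ℝ) (x : X) (C C' C'' : Set X) : Prop :=
  ∃ ε₀ : ℝ, 0 < ε₀ ∧ ∀ ε : ℝ, 0 < ε → ε < ε₀ →
    ∀ p p' p'' : ℝ × ℝ, H.ExitPt φ x C ε p → H.ExitPt φ x C' ε p' →
      H.ExitPt φ x C'' ε p'' → Ccw p p' p''

/-- `f` respects the cyclic order (induced by the embedding `φ`) of the local arms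
at all branch points. -/
def RespectsCyclicOrder (φ : X → ℝ × ℝ) : Prop :=
  ∀ x : X, IsBranchPt x →
    ∀ C C' C'' : Set X, C ∈ arms x → C' ∈ arms x → C'' ∈ arms x →
      C ≠ C' → C' ≠ C'' → C ≠ C'' → H.ArmsCcw φ x C C' C'' →
      ∀ D D' D'' : Set X, MapsLocalArm H.f x C D → MapsLocalArm H.f x C' D' →
        MapsLocalArm H.f x C'' D'' → H.ArmsCcw φ (H.f x) D D' D''

/-- The Hubbard tree can be topologically embedded into the plane `ℝ²` so that `f`
respects the cyclic order of the local arms at all branch points. -/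
def PlanarEmbeddable : Prop :=
  ∃ φ : X → ℝ × ℝ, Topology.IsEmbedding φ ∧ H.RespectsCyclicOrder φ

end HubbardTree

/-!
A local arm at `x ≠ c₀` pointing to `y` is mapped by `f` to the arm pointing to `f y`, unless `c₀`
separates `x` from `y`, in which case it is mapped to the arm pointing to `c₁`. Since `c₁` is an
endpoint, `c₀` has at most two arms, so `c₀` separates two points exactly when their symbols differ.

Let `z` be characteristic of period `n`. Seen from any other point of its orbit, `c₁` lies in the
direction of `z`. Starting with the arm at `z` towards `c₀`, its image under `f^k` therefore points
to `f^(k - m) z`, where `m` is the last entry of the internal address before `k`; the entries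
themselves are the times at which the image points to `c₁`. At time `n` this gives `c₁` if `n` is an
entry, and an orbit point, hence `c₀`, otherwise. Finally, by expansivity every arm at `z` is
eventually mapped towards `c₁`, and from then on its images point to orbit points or to `c₁`, so its
cycle under the first return map contains the arm towards `c₀` or the arm towards `c₁`.
-/

open Set Function Topology

section Arms

variable {X : Type*} [TopologicalSpace X] {x y : X} {C D : Set X}

lemma armTo_mem_arms (h : y ≠ x) : armTo x y ∈ arms x := ⟨y, h, rfl⟩

lemma mem_armTo (h : y ≠ x) : y ∈ armTo x y := mem_connectedComponentIn h

lemma notMem_armTo_left (x y : X) : x ∉ armTo x y :=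
  fun h => connectedComponentIn_subset _ _ h rfl

lemma armTo_self (x : X) : armTo x x = ∅ := connectedComponentIn_eq_empty (by simp)

lemma isPreconnected_armTo (x y : X) : IsPreconnected (armTo x y) :=
  isPreconnected_connectedComponentIn

lemma subset_armTo {S : Set X} (hS : IsPreconnected S) (hx : x ∉ S) (hy : y ∈ S) :
    S ⊆ armTo x y :=
  hS.subset_connectedComponentIn hy (subset_compl_singleton_iff.2 hx)

lemma armTo_eq_of_mem {w : X} (h : w ∈ armTo x y) : armTo x w = armTo x y :=
  (connectedComponentIn_eq h).symm

lemma eq_armTo_of_mem (hC : C ∈ arms x) (hy : y ∈ C) : C = armTo x y := by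
  obtain ⟨w, -, rfl⟩ := hC
  exact (armTo_eq_of_mem hy).symm

lemma notMem_arm (hC : C ∈ arms x) : x ∉ C := by
  obtain ⟨w, -, rfl⟩ := hC
  exact notMem_armTo_left x w

lemma nonempty_arm (hC : C ∈ arms x) : C.Nonempty := by
  obtain ⟨w, hw, rfl⟩ := hC
  exact ⟨w, mem_armTo hw⟩

lemma ne_of_armTo_mem_arms (h : armTo x y ∈ arms x) : y ≠ x := by
  rintro rfl
  simpa [armTo_self] using nonempty_arm h

lemma closure_armTo_subset (x y : X) : closure (armTo x y) ⊆ insert x (armTo x y) := by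
  intro k hk
  obtain rfl | hkx := eq_or_ne k x
  · exact mem_insert _ _
  obtain ⟨w, hw⟩ := closure_nonempty_iff.1 ⟨k, hk⟩
  have hpre : IsPreconnected (insert k (armTo x y)) :=
    (isPreconnected_armTo x y).subset_closure (subset_insert _ _) (insert_subset hk subset_closure)
  have havoid : x ∉ insert k (armTo x y) := by
    rintro (h | h)
    exacts [hkx h.symm, notMem_armTo_left x y h]
  refine mem_insert_of_mem _ (armTo_eq_of_mem hw ▸ ?_)
  exact subset_armTo hpre havoid (mem_insert_of_mem _ hw) (mem_insert _ _)

lemma isClosed_insert_armTo [T1Space X] (x y : X) : IsClosed (insert x (armTo x y)) := by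
  refine isClosed_of_closure_subset ?_
  rw [insert_eq, closure_union, closure_singleton]
  exact union_subset subset_union_left (closure_armTo_subset x y)

lemma isOpen_arm [T1Space X] (hfin : (arms x).Finite) (hC : C ∈ arms x) : IsOpen C := by
  have hcompl : Cᶜ = {x} ∪ ⋃ D ∈ arms x \ {C}, insert x D := by
    ext y
    simp only [mem_compl_iff, mem_union, mem_singleton_iff, mem_iUnion, mem_sdiff, exists_prop,
      mem_insert_iff]
    constructor
    · intro hy
      by_cases hyx : y = x
      · exact .inl hyx
      · exact .inr ⟨armTo x y, ⟨armTo_mem_arms hyx, fun h => hy (h ▸ mem_armTo hyx)⟩,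
          .inr (mem_armTo hyx)⟩
    · rintro (rfl | ⟨D, ⟨hD, hDC⟩, rfl | hyD⟩) hy
      · exact notMem_arm hC hy
      · exact notMem_arm hC hy
      · exact hDC ((eq_armTo_of_mem hD hyD).trans (eq_armTo_of_mem hC hy).symm)
  rw [← isClosed_compl_iff, hcompl]
  refine isClosed_singleton.union ((hfin.subset sdiff_subset).isClosed_biUnion ?_)
  rintro D ⟨⟨y, -, rfl⟩, -⟩
  exact isClosed_insert_armTo x y

lemma isOpen_armTo [T1Space X] (hfin : (arms x).Finite) (y : X) : IsOpen (armTo x y) := by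
  obtain rfl | hyx := eq_or_ne y x
  · simp [armTo_self]
  · exact isOpen_arm hfin (armTo_mem_arms hyx)

lemma mem_closure_armTo [T1Space X] [PreconnectedSpace X] (hfin : (arms x).Finite) (hyx : y ≠ x) :
    x ∈ closure (armTo x y) := by
  by_contra hx
  have hclosed : IsClosed (armTo x y) := isClosed_of_closure_subset fun k hk =>
    (closure_armTo_subset x y hk).resolve_left fun h => hx (h ▸ hk)
  obtain h | h := isClopen_iff.1 ⟨hclosed, isOpen_armTo hfin y⟩
  · exact notMem_empty y (h ▸ mem_armTo hyx)
  · exact notMem_armTo_left x y (h ▸ mem_univ x)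

lemma isPreconnected_insert_armTo [T1Space X] [PreconnectedSpace X] (hfin : (arms x).Finite)
    (y : X) : IsPreconnected (insert x (armTo x y)) := by
  obtain rfl | hyx := eq_or_ne y x
  · simpa only [armTo_self, insert_empty_eq] using isPreconnected_singleton
  exact (isPreconnected_armTo x y).subset_closure (subset_insert _ _)
    (insert_subset (mem_closure_armTo hfin hyx) subset_closure)

lemma armTo_subset_armTo {v : X} (h : v ∉ armTo x y) : armTo x y ⊆ armTo v y := by
  obtain rfl | hyx := eq_or_ne y x
  · simp [armTo_self]
  · exact subset_armTo (isPreconnected_armTo x y) h (mem_armTo hyx)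

lemma compl_arm_subset_armTo [T1Space X] [PreconnectedSpace X] {w : X} (hfin : (arms x).Finite)
    (hC : C ∈ arms x) (hw : w ∈ C) : Cᶜ ⊆ armTo w x := by
  intro y hy
  refine subset_armTo (isPreconnected_insert_armTo hfin y) ?_ (mem_insert _ _) ?_
  · rintro (rfl | h)
    · exact notMem_arm hC hw
    · rw [eq_armTo_of_mem hC hw, armTo_eq_of_mem h] at hy
      by_cases hyx : y = x
      · simp [hyx, armTo_self] at h
      · exact hy (mem_armTo hyx)
  · by_cases hyx : y = x
    · exact .inl hyx
    · exact .inr (mem_armTo hyx)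

lemma IsEndpoint.arm_unique (hx : IsEndpoint x) (hC : C ∈ arms x) (hD : D ∈ arms x) : C = D := by
  obtain ⟨A, hA⟩ := ncard_eq_one.1 hx
  rw [hA] at hC hD
  exact hC.trans hD.symm

lemma isEndpoint_of_forall_eq (hC : C ∈ arms x) (h : ∀ D ∈ arms x, D = C) : IsEndpoint x :=
  ncard_eq_one.2 ⟨C, eq_singleton_iff_unique_mem.2 ⟨hC, h⟩⟩

/- The union of a chain of the sets `armTo w x` is not everything, by compactness, and a point
outside the union gives an upper bound. -/
lemma exists_maximal_armTo [T1Space X] [PreconnectedSpace X] [CompactSpace X]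
    (hfin : ∀ x : X, (arms x).Finite) (hD : D ∈ arms x) :
    ∃ w ∈ D, ∀ v ∈ D, armTo w x ⊆ armTo v x → armTo v x ⊆ armTo w x := by
  obtain ⟨w₀, hw₀⟩ := nonempty_arm hD
  suffices hchain : ∀ c ⊆ (armTo · x) '' D, IsChain (· ⊆ ·) c → c.Nonempty →
      ∃ ub ∈ (armTo · x) '' D, ∀ s ∈ c, s ⊆ ub by
    obtain ⟨_, -, ⟨w, hw, rfl⟩, hmax⟩ := zorn_subset_nonempty _ hchain _ ⟨w₀, hw₀, rfl⟩
    exact ⟨w, hw, fun v hv hle => hmax ⟨v, hv, rfl⟩ hle⟩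
  intro c hcD hc hne
  obtain ⟨v, hv⟩ : ∃ v, ∀ s ∈ c, v ∉ s := by
    by_contra! hcover
    have := hne.to_subtype
    obtain ⟨⟨s, hs⟩, hsuniv⟩ := isCompact_univ.elim_directed_cover (fun s : c => (s : Set X))
      (fun s => by obtain ⟨w, -, hw⟩ := hcD s.2; exact hw ▸ isOpen_armTo (hfin w) x)
      (fun v _ => by simpa using hcover v) hc.directedOn.directed_val
    obtain ⟨w, -, rfl⟩ := hcD hs
    exact notMem_armTo_left w x (hsuniv (mem_univ w))
  refine ⟨armTo v x, ⟨v, ?_, rfl⟩, fun s hs => ?_⟩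
  · by_contra hvD
    obtain ⟨s, hs⟩ := hne
    obtain ⟨w, hw, rfl⟩ := hcD hs
    exact hv _ hs (compl_arm_subset_armTo (hfin x) hD hw hvD)
  · obtain ⟨w, -, rfl⟩ := hcD hs
    exact armTo_subset_armTo (hv _ hs)

lemma exists_isEndpoint_mem_arm [T1Space X] [PreconnectedSpace X] [CompactSpace X]
    (hfin : ∀ x : X, (arms x).Finite) (hD : D ∈ arms x) : ∃ e ∈ D, IsEndpoint e := by
  obtain ⟨w, hw, hmax⟩ := exists_maximal_armTo hfin hD
  have hxw : x ≠ w := fun h => notMem_arm hD (h ▸ hw)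
  refine ⟨w, hw, isEndpoint_of_forall_eq (armTo_mem_arms hxw) fun E hE => ?_⟩
  by_contra hEne
  obtain ⟨v, hv⟩ := nonempty_arm hE
  have hv' : v ∉ armTo w x := fun h =>
    hEne ((eq_armTo_of_mem hE hv).trans (armTo_eq_of_mem h))
  have hvD : v ∈ D := by
    by_contra hvD
    exact hv' (compl_arm_subset_armTo (hfin x) hD hw hvD)
  have hwv : w ∈ armTo v x := by
    refine subset_armTo (isPreconnected_insert_armTo (hfin w) x) ?_
      (mem_insert_of_mem _ (mem_armTo hxw)) (mem_insert _ _)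
    rintro (rfl | h)
    exacts [notMem_arm hE hv, hv' h]
  exact notMem_armTo_left w x (hmax v hvD (armTo_subset_armTo hv') hwv)

lemma exists_isEndpoint_notMem_arm [T1Space X] [PreconnectedSpace X] [CompactSpace X]
    (hfin : ∀ x : X, (arms x).Finite) (hC : C ∈ arms x) : ∃ e, IsEndpoint e ∧ e ∉ C := by
  by_cases hx : IsEndpoint x
  · exact ⟨x, hx, notMem_arm hC⟩
  obtain ⟨D, hD, hDC⟩ : ∃ D ∈ arms x, D ≠ C := by
    by_contra! h
    exact hx (isEndpoint_of_forall_eq hC h)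
  obtain ⟨e, heD, he⟩ := exists_isEndpoint_mem_arm hfin hD
  exact ⟨e, he, fun heC => hDC ((eq_armTo_of_mem hD heD).trans (eq_armTo_of_mem hC heC).symm)⟩

end Arms

section Arcs

variable {X : Type*} [TopologicalSpace X]

lemma IsArcBetween.symm {A : Set X} {x y : X} (h : IsArcBetween A x y) : IsArcBetween A y x := by
  obtain ⟨rfl, rfl⟩ | ⟨hxy, γ, hγ, rfl⟩ := h
  · exact .inl ⟨rfl, rfl⟩
  · exact .inr ⟨hxy.symm, γ.symm, hγ.comp unitInterval.symmHomeomorph.isEmbedding, γ.symm_range⟩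

lemma isArcBetween_image_Icc [T2Space X] {g : ℝ → X} {a b : ℝ} (hab : a ≤ b)
    (hg : ContinuousOn g (Icc a b)) (hinj : InjOn g (Icc a b)) :
    IsArcBetween (g '' Icc a b) (g a) (g b) := by
  obtain rfl | hlt := hab.eq_or_lt
  · exact .inl ⟨rfl, by simp⟩
  refine .inr ⟨fun h => hlt.ne (hinj (left_mem_Icc.2 hab) (right_mem_Icc.2 hab) h), ?_⟩
  let e := (iccHomeoI a b hlt).symm
  let γ : Path (g a) (g b) :=
    { toFun := fun t => g (e t)
      continuous_toFun := hg.comp_continuous (by fun_prop) fun t => (e t).2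
      source' := by simp [e]
      target' := by simp [e] }
  refine ⟨γ, (γ.continuous.isClosedEmbedding fun s t hst => ?_).isEmbedding, ?_⟩
  · exact e.injective (Subtype.ext (hinj (e s).2 (e t).2 hst))
  · calc range (fun t => g (e t)) = range (fun t : Icc a b => g t) :=
        e.surjective.range_comp fun t : Icc a b => g t
      _ = g '' Icc a b := (image_eq_range g _).symm

lemma IsArcBetween.exists_param {A : Set X} {x y : X} (h : IsArcBetween A x y) (a : ℝ) :
    ∃ (g : ℝ → X) (b : ℝ), a ≤ b ∧ Continuous g ∧ InjOn g (Icc a b) ∧ g a = x ∧ g b = y ∧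
      A = g '' Icc a b := by
  obtain ⟨rfl, rfl⟩ | ⟨-, γ, hγ, rfl⟩ := h
  · exact ⟨fun _ => x, a, le_rfl, continuous_const, by simp, rfl, rfl, by simp⟩
  have hmem : ∀ t ∈ Icc a (a + 1), t - a ∈ unitInterval := fun t ht =>
    ⟨by linarith [ht.1], by linarith [ht.2]⟩
  refine ⟨fun t => γ.extend (t - a), a + 1, by linarith, by fun_prop, fun s hs t ht hst => ?_,
    by simp, by simp, Subset.antisymm ?_ ?_⟩
  · simp only [Path.extend_apply _ (hmem s hs), Path.extend_apply _ (hmem t ht)] at hst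
    linarith [congrArg Subtype.val (hγ.injective hst)]
  · rintro _ ⟨t, rfl⟩
    exact ⟨t + a, ⟨by linarith [t.2.1], by linarith [t.2.2]⟩, by simp⟩
  · rintro _ ⟨t, ht, rfl⟩
    exact ⟨⟨t - a, hmem t ht⟩, (Path.extend_apply _ _).symm⟩

/-- A space in which any two points are joined by exactly one arc. -/
class UniquelyArcConnected (X : Type*) [TopologicalSpace X] : Prop where
  existsUnique_arc : ∀ x y : X, ∃! A : Set X, IsArcBetween A x y

variable [UniquelyArcConnected X]

/-- The arc `[x, y]`. -/
noncomputable def arcBetween (x y : X) : Set X :=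
  (UniquelyArcConnected.existsUnique_arc x y).choose

variable {a b x y u : X}

lemma isArcBetween_arcBetween (x y : X) : IsArcBetween (arcBetween x y) x y :=
  (UniquelyArcConnected.existsUnique_arc x y).choose_spec.1

lemma IsArcBetween.eq_arcBetween {A : Set X} (h : IsArcBetween A x y) : A = arcBetween x y :=
  (UniquelyArcConnected.existsUnique_arc x y).choose_spec.2 A h

lemma arcBetween_self (x : X) : arcBetween x x = {x} :=
  (IsArcBetween.eq_arcBetween (.inl ⟨rfl, rfl⟩)).symm

lemma arcBetween_comm (x y : X) : arcBetween x y = arcBetween y x :=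
  (isArcBetween_arcBetween x y).symm.eq_arcBetween

lemma left_mem_arcBetween (x y : X) : x ∈ arcBetween x y := by
  obtain ⟨g, b, hb, -, -, rfl, rfl, h⟩ := (isArcBetween_arcBetween x y).exists_param 0
  exact h ▸ mem_image_of_mem g (left_mem_Icc.2 hb)

lemma right_mem_arcBetween (x y : X) : y ∈ arcBetween x y :=
  arcBetween_comm x y ▸ left_mem_arcBetween y x

lemma isCompact_arcBetween (x y : X) : IsCompact (arcBetween x y) := by
  obtain ⟨g, b, -, hg, -, -, -, h⟩ := (isArcBetween_arcBetween x y).exists_param 0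
  exact h ▸ isCompact_Icc.image hg

lemma isPreconnected_arcBetween (x y : X) : IsPreconnected (arcBetween x y) := by
  obtain ⟨g, b, -, hg, -, -, -, h⟩ := (isArcBetween_arcBetween x y).exists_param 0
  exact h ▸ isPreconnected_Icc.image g hg.continuousOn

instance : PreconnectedSpace X where
  isPreconnected_univ := isPreconnected_of_forall_pair fun x _ y _ =>
    ⟨arcBetween x y, subset_univ _, left_mem_arcBetween x y, right_mem_arcBetween x y,
      isPreconnected_arcBetween x y⟩

lemma armTo_eq_of_notMem_arcBetween (h : x ∉ arcBetween a b) : armTo x a = armTo x b :=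
  (armTo_eq_of_mem (subset_armTo (isPreconnected_arcBetween a b) h (left_mem_arcBetween a b)
    (right_mem_arcBetween a b))).symm

lemma infinite_arcBetween_sdiff (h : x ≠ y) : (arcBetween x y \ {x, y}).Infinite := by
  obtain ⟨g, b, hb, -, hinj, rfl, rfl, hA⟩ := (isArcBetween_arcBetween x y).exists_param 0
  have hb' : 0 < b := hb.lt_of_ne (by rintro rfl; exact h rfl)
  have hsdiff : arcBetween (g 0) (g b) \ {g 0, g b} = g '' Ioo 0 b := by
    rw [← Icc_sdiff_both, hinj.image_sdiff_subset (pair_subset (left_mem_Icc.2 hb)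
      (right_mem_Icc.2 hb)), image_pair, hA]
  exact hsdiff ▸ (Ioo_infinite hb').image (hinj.mono Ioo_subset_Icc_self)

lemma image_arcBetween {Y : Type*} [TopologicalSpace Y] [T2Space Y] [UniquelyArcConnected Y]
    {f : X → Y} (hf : Continuous f) (hinj : InjOn f (arcBetween x y)) :
    f '' arcBetween x y = arcBetween (f x) (f y) := by
  obtain ⟨g, b, hb, hg, hginj, rfl, rfl, hA⟩ := (isArcBetween_arcBetween x y).exists_param 0
  rw [hA] at hinj ⊢
  rw [← image_comp]
  exact (isArcBetween_image_Icc (g := f ∘ g) hb (hf.comp hg).continuousOn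
    (hinj.comp hginj (mapsTo_image _ _))).eq_arcBetween

variable [T2Space X]

lemma isClosed_arcBetween (x y : X) : IsClosed (arcBetween x y) :=
  (isCompact_arcBetween x y).isClosed

lemma arcBetween_eq_image_Icc {g : ℝ → X} {a b : ℝ} (hab : a ≤ b) (hg : ContinuousOn g (Icc a b))
    (hinj : InjOn g (Icc a b)) : arcBetween (g a) (g b) = g '' Icc a b :=
  (isArcBetween_image_Icc hab hg hinj).eq_arcBetween.symm

lemma arcBetween_split (hu : u ∈ arcBetween x y) :
    arcBetween x y = arcBetween x u ∪ arcBetween u y ∧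
      arcBetween x u ∩ arcBetween u y ⊆ {u} := by
  obtain ⟨g, b, -, hg, hinj, rfl, rfl, hA⟩ := (isArcBetween_arcBetween x y).exists_param 0
  obtain ⟨t, ht, rfl⟩ := hA ▸ hu
  have hleft : Icc 0 t ⊆ Icc 0 b := Icc_subset_Icc_right ht.2
  have hright : Icc t b ⊆ Icc 0 b := Icc_subset_Icc_left ht.1
  rw [hA, arcBetween_eq_image_Icc ht.1 hg.continuousOn (hinj.mono hleft),
    arcBetween_eq_image_Icc ht.2 hg.continuousOn (hinj.mono hright), ← image_union,
    Icc_union_Icc_eq_Icc ht.1 ht.2, ← hinj.image_inter hleft hright,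
    Icc_inter_Icc_eq_singleton ht.1 ht.2, image_singleton]
  exact ⟨rfl, subset_rfl⟩

lemma arcBetween_subset_left (hu : u ∈ arcBetween x y) : arcBetween x u ⊆ arcBetween x y :=
  (arcBetween_split hu).1 ▸ subset_union_left

lemma arcBetween_subset_right (hu : u ∈ arcBetween x y) : arcBetween u y ⊆ arcBetween x y :=
  (arcBetween_split hu).1 ▸ subset_union_right

lemma eq_of_mem_arcBetween_of_mem_arcBetween {w : X} (hu : u ∈ arcBetween x y)
    (hleft : w ∈ arcBetween x u) (hright : w ∈ arcBetween u y) : w = u :=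
  (arcBetween_split hu).2 ⟨hleft, hright⟩

lemma arcBetween_eq_union (hu : arcBetween x u ∩ arcBetween u y ⊆ {u}) :
    arcBetween x y = arcBetween x u ∪ arcBetween u y := by
  obtain ⟨g, b, hb, hg, hginj, rfl, rfl, hA⟩ := (isArcBetween_arcBetween x u).exists_param 0
  obtain ⟨k, c, hc, hk, hkinj, hkb, rfl, hB⟩ := (isArcBetween_arcBetween (g b) y).exists_param b
  let m : ℝ → X := fun t => if t ≤ b then g t else k t
  have hmg : EqOn m g (Icc 0 b) := fun t ht => if_pos ht.2
  have hmk : EqOn m k (Icc b c) := fun t ht => by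
    obtain rfl | hlt := ht.1.eq_or_lt
    exacts [(if_pos le_rfl).trans hkb.symm, if_neg hlt.not_ge]
  have hm : Continuous m :=
    Continuous.if_le hg hk continuous_id continuous_const (by rintro t rfl; exact hkb.symm)
  have hminj : InjOn m (Icc 0 c) := by
    rw [← Icc_union_Ioc_eq_Icc hb hc, injOn_union
      (disjoint_left.2 fun t ht ht' => ht.2.not_gt ht'.1)]
    refine ⟨hmg.injOn_iff.2 hginj, (hmk.injOn_iff.2 hkinj).mono Ioc_subset_Icc_self,
      fun s hs t ht hst => ?_⟩
    have ht' := Ioc_subset_Icc_self ht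
    rw [hmg hs, hmk ht'] at hst
    have hkt : k t = g b := hu ⟨hA ▸ ⟨s, hs, hst⟩, hB ▸ mem_image_of_mem k ht'⟩
    exact ht.1.ne' (hkinj ht' (left_mem_Icc.2 hc) (hkt.trans hkb.symm))
  have key := arcBetween_eq_image_Icc (hb.trans hc) hm.continuousOn hminj
  rwa [← Icc_union_Icc_eq_Icc hb hc, image_union, hmg.image_eq, hmk.image_eq, ← hA, ← hB,
    hmg (left_mem_Icc.2 hb), hmk (right_mem_Icc.2 hc)] at key

lemma exists_mem_arcBetween_inter_subset_singleton {K : Set X} (hK : IsClosed K) (hy : y ∈ K) :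
    ∃ h ∈ arcBetween x y, h ∈ K ∧ arcBetween x h ∩ K ⊆ {h} := by
  obtain ⟨g, b, hb, hg, hinj, rfl, rfl, hA⟩ := (isArcBetween_arcBetween x y).exists_param 0
  obtain ⟨t, ⟨ht, htK⟩, hmin⟩ := (isCompact_Icc.inter_right (hK.preimage hg)).exists_isLeast
    ⟨b, right_mem_Icc.2 hb, hy⟩
  refine ⟨g t, hA ▸ mem_image_of_mem g ht, htK, ?_⟩
  have hsub : Icc 0 t ⊆ Icc 0 b := Icc_subset_Icc_right ht.2
  rw [arcBetween_eq_image_Icc ht.1 hg.continuousOn (hinj.mono hsub)]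
  rintro _ ⟨⟨r, hr, rfl⟩, hrK⟩
  rw [mem_singleton_iff, le_antisymm hr.2 (hmin ⟨hsub hr, hrK⟩)]

lemma arcBetween_subset_union (x u y : X) :
    arcBetween x y ⊆ arcBetween x u ∪ arcBetween u y := by
  obtain ⟨h, hxu, huy, hsingle⟩ := exists_mem_arcBetween_inter_subset_singleton (x := x)
    (isClosed_arcBetween u y) (left_mem_arcBetween u y)
  rw [arcBetween_eq_union fun w hw => hsingle ⟨hw.1, arcBetween_subset_right huy hw.2⟩]
  exact union_subset_union (arcBetween_subset_left hxu) (arcBetween_subset_right huy)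

lemma exists_ne_mem_arcBetween_inter (h : x ∉ arcBetween a b) :
    ∃ s, s ≠ x ∧ s ∈ arcBetween x a ∧ s ∈ arcBetween x b := by
  by_contra! hdisj
  refine h ?_
  rw [arcBetween_eq_union (u := x)]
  · exact .inl (right_mem_arcBetween a x)
  · rintro w ⟨ha, hb⟩
    by_contra hw
    exact hdisj w hw (arcBetween_comm a x ▸ ha) hb

/- Closing up the loop would give a second arc between two of its points. -/
lemma injOn_Icc_of_injOn_Ico {h : ℝ → X} {a t : ℝ} (hh : ContinuousOn h (Icc a t))
    (hinj : InjOn h (Ico a t)) : InjOn h (Icc a t) := by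
  by_cases hat : a ≤ t
  swap
  · simp [hat]
  suffices hnot : ∀ s ∈ Ico a t, h s ≠ h t by
    rw [← Ico_insert_right hat, injOn_insert right_notMem_Ico]
    exact ⟨hinj, fun ⟨s, hs, hst⟩ => hnot s hs hst⟩
  intro s hs hst
  obtain ⟨m, hsm, hmt⟩ := exists_between hs.2
  obtain ⟨r, hsr, hrm⟩ := exists_between hsm
  have hne : ∀ u ∈ Ico a t, s < u → h t ≠ h u := fun u hu hsu htu =>
    hsu.ne (hinj hs hu (hst.trans htu))
  have hmIco : ∀ u ∈ Ico m t, u ∈ Ico a t := fun u hu => ⟨hs.1.trans (hsm.le.trans hu.1), hu.2⟩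
  have hleft : arcBetween (h s) (h m) = h '' Icc s m :=
    arcBetween_eq_image_Icc hsm.le (hh.mono (Icc_subset_Icc hs.1 hmt.le))
      (hinj.mono (Icc_subset_Ico hs.1 hmt))
  have hright : arcBetween (h m) (h t) = h '' Icc m t := by
    refine arcBetween_eq_image_Icc hmt.le (hh.mono (Icc_subset_Icc_left (hs.1.trans hsm.le))) ?_
    rw [← Ico_insert_right hmt.le, injOn_insert right_notMem_Ico]
    exact ⟨hinj.mono hmIco, fun ⟨u, hu, hut⟩ =>
      hne u (hmIco u hu) (hsm.trans_le hu.1) hut.symm⟩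
  rw [hst, arcBetween_comm, hright] at hleft
  obtain ⟨r', hr', hrr'⟩ : h r ∈ h '' Icc m t := by
    rw [hleft]
    exact ⟨r, ⟨hsr.le, hrm.le⟩, rfl⟩
  have hr : r ∈ Ico a t := ⟨hs.1.trans hsr.le, hrm.trans hmt⟩
  obtain rfl | hlt := hr'.2.eq_or_lt
  · exact hne r hr hsr hrr'
  · exact (hrm.trans_le hr'.1).ne' (hinj (hmIco r' ⟨hr'.1, hlt⟩) hr hrr')

lemma exists_gt_injOn_Icc {Y : Type*} [TopologicalSpace Y] [T2Space Y] {h : ℝ → Y} {a b t : ℝ}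
    {U : Set ℝ} (hh : Continuous h) (htb : t < b) (hinj : InjOn h (Icc a t)) (hU : U ∈ 𝓝 t)
    (hUinj : InjOn h (U ∩ Icc a b)) : ∃ t' ∈ Ioc t b, InjOn h (Icc a t') := by
  obtain ⟨l, u, htu, hlu⟩ := mem_nhds_iff_exists_Ioo_subset.1 hU
  have hV : (h ⁻¹' (h '' Icc a l))ᶜ ∈ 𝓝 t := by
    refine ((isCompact_Icc.image hh).isClosed.preimage hh).isOpen_compl.mem_nhds ?_
    rintro ⟨r, hr, hrt⟩
    have hrt' : r < t := hr.2.trans_lt htu.1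
    exact hrt'.ne (hinj ⟨hr.1, hrt'.le⟩ (right_mem_Icc.2 (hr.1.trans hrt'.le)) hrt)
  obtain ⟨l', u', htu', hlu'⟩ := mem_nhds_iff_exists_Ioo_subset.1 hV
  obtain ⟨t', htt', ht'⟩ := exists_between (lt_min (lt_min htu.2 htu'.2) htb)
  simp only [lt_min_iff] at ht'
  refine ⟨t', ⟨htt', ht'.2.le⟩, fun r hr s hs hrs => ?_⟩
  wlog hle : r ≤ s generalizing r s
  · exact (this s hs r hr hrs.symm (le_of_not_ge hle)).symm
  rcases le_or_gt s t with hst | hts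
  · exact hinj ⟨hr.1, hle.trans hst⟩ ⟨hs.1, hst⟩ hrs
  rcases le_or_gt r l with hrl | hlr
  · exact absurd ⟨r, ⟨hr.1, hrl⟩, hrs⟩ (hlu' ⟨htu'.1.trans hts, hs.2.trans_lt ht'.1.2⟩)
  · exact hUinj ⟨hlu ⟨hlr, hr.2.trans_lt ht'.1.1⟩, hr.1, hr.2.trans ht'.2.le⟩
      ⟨hlu ⟨htu.1.trans hts, hs.2.trans_lt ht'.1.1⟩, hs.1, hs.2.trans ht'.2.le⟩ hrs

lemma injOn_Icc_of_locally_injOn {h : ℝ → X} {a b : ℝ} (hh : Continuous h)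
    (hloc : ∀ t ∈ Ico a b, ∃ U ∈ 𝓝 t, InjOn h (U ∩ Icc a b)) : InjOn h (Icc a b) := by
  by_cases hab : a ≤ b
  swap
  · simp [hab]
  suffices hsub : Icc a b ⊆ {t | InjOn h (Icc a t)} from hsub (right_mem_Icc.2 hab)
  refine IsClosed.Icc_subset_of_forall_exists_gt ?_ (by simp) ?_
  · refine isClosed_of_closure_subset fun t ht => ⟨?_, closure_minimal inter_subset_right
      isClosed_Icc ht⟩
    refine injOn_Icc_of_injOn_Ico hh.continuousOn fun r hr s hs hrs => ?_
    obtain ⟨t', ht', hinj, -⟩ := mem_closure_iff_nhds.1 ht _ (Ioi_mem_nhds (max_lt hr.2 hs.2))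
    rw [mem_Ioi, max_lt_iff] at ht'
    exact hinj ⟨hr.1, ht'.1.le⟩ ⟨hs.1, ht'.2.le⟩ hrs
  · rintro t ⟨hinj, ht⟩ y hty
    obtain ⟨U, hU, hUinj⟩ := hloc t ht
    obtain ⟨t', ht', hinj'⟩ := exists_gt_injOn_Icc hh (lt_min ht.2 hty) hinj hU
      (hUinj.mono (inter_subset_inter_right U (Icc_subset_Icc_right (min_le_left b y))))
    exact ⟨t', hinj', ht'.1, ht'.2.trans (min_le_right b y)⟩

end Arcs

/-- A finite topological tree: a compact Hausdorff uniquely arcwise connected space with finitely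
many endpoints, in which every point has finitely many arms. -/
class FiniteTree (X : Type*) [TopologicalSpace X] : Prop extends
    CompactSpace X, T2Space X, UniquelyArcConnected X where
  arms_finite : ∀ x : X, (arms x).Finite
  endpoint_finite : {x : X | IsEndpoint x}.Finite

section FiniteTree

variable {X : Type*} [TopologicalSpace X] [FiniteTree X] {x y p q : X} {C U : Set X}

open FiniteTree (arms_finite endpoint_finite)

/- Each exceptional point carries an endpoint outside its arm towards `p`, and distinct exceptional
points carry distinct endpoints. -/
lemma finite_setOf_armTo_left_eq_right (p q : X) :
    {x ∈ arcBetween p q | x ≠ p ∧ armTo x p = armTo x q}.Finite := by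
  set B := {x ∈ arcBetween p q | x ≠ p ∧ armTo x p = armTo x q}
  have hmem : ∀ x ∈ B, ∀ y ∈ arcBetween p q, y ≠ x → y ∈ armTo x p := by
    rintro x ⟨-, -, hpq⟩ y hy hyx
    by_cases hx : x ∈ arcBetween p y
    · have hx' : x ∉ arcBetween y q := fun hx' =>
        hyx (eq_of_mem_arcBetween_of_mem_arcBetween hy hx hx').symm
      exact hpq ▸ armTo_eq_of_notMem_arcBetween hx' ▸ mem_armTo hyx
    · exact armTo_eq_of_notMem_arcBetween hx ▸ mem_armTo hyx
  have hend : ∀ x ∈ B, ∃ e, IsEndpoint e ∧ e ∉ armTo x p := fun x hx =>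
    exists_isEndpoint_notMem_arm arms_finite (armTo_mem_arms hx.2.1.symm)
  choose! e he hep using hend
  refine Finite.of_finite_image (f := e) (endpoint_finite.subset (image_subset_iff.2 he)) ?_
  intro x hx y hy hxy
  by_contra hne
  have hyx := hmem x hx y hy.1 (Ne.symm hne)
  have hsub := compl_arm_subset_armTo (arms_finite x) (armTo_mem_arms hx.2.1.symm) hyx
  have hey : e y ∈ armTo y x := hxy ▸ hsub (hep x hx)
  exact hep y hy (armTo_eq_of_mem (hmem y hy x hx.1 hne) ▸ hey)

lemma exists_mem_arcBetween_armTo_ne (h : p ≠ q) :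
    ∃ t ∈ arcBetween p q, t ≠ p ∧ t ≠ q ∧ armTo t p ≠ armTo t q := by
  obtain ⟨t, ⟨ht, htpq⟩, hsep⟩ := (infinite_arcBetween_sdiff h).exists_notMem_finite
    (finite_setOf_armTo_left_eq_right p q)
  simp only [mem_insert_iff, mem_singleton_iff, not_or] at htpq
  exact ⟨t, ht, htpq.1, htpq.2, fun hpq => hsep ⟨ht, htpq.1, hpq⟩⟩

lemma isOpen_setOf_notMem_arcBetween (x p : X) : IsOpen {y | x ∉ arcBetween p y} := by
  refine isOpen_iff_forall_mem_open.2 fun y hy => ?_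
  have hyx : y ≠ x := fun h => hy (h ▸ right_mem_arcBetween p y)
  obtain ⟨t, ht, hty, htx, hsep⟩ := exists_mem_arcBetween_armTo_ne hyx
  refine ⟨armTo t y, fun w hw hxw => ?_, isOpen_armTo (arms_finite t) y, mem_armTo hty.symm⟩
  have htw : t ∈ arcBetween w x := by
    by_contra h
    exact hsep ((armTo_eq_of_mem hw).symm.trans (armTo_eq_of_notMem_arcBetween h))
  have hxt : ∀ v, t ∈ arcBetween v x → x ∉ arcBetween v t := fun v hv h =>
    htx (eq_of_mem_arcBetween_of_mem_arcBetween hv h (right_mem_arcBetween t x)).symm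
  obtain h | h := arcBetween_subset_union p y w hxw
  · exact hy h
  obtain h | h := arcBetween_subset_union y t w h
  · exact hxt y ht h
  · exact hxt w htw (arcBetween_comm t w ▸ h)

lemma armTo_eq_setOf_notMem_arcBetween (hp : p ≠ x) : armTo x p = {y | x ∉ arcBetween p y} := by
  refine Subset.antisymm ?_ fun y hy => ?_
  · refine (isPreconnected_armTo x p).subset_left_of_subset_union
      (v := ⋃ q ∈ {q | x ∈ arcBetween p q}, {y | x ∉ arcBetween q y})
      (isOpen_setOf_notMem_arcBetween x p)
      (isOpen_biUnion fun q _ => isOpen_setOf_notMem_arcBetween x q) ?_ (fun y hy => ?_)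
      ⟨p, mem_armTo hp, by simpa [arcBetween_self] using hp.symm⟩
    · refine disjoint_left.2 fun y hpy hy => ?_
      obtain ⟨q, hpq, hqy⟩ := mem_iUnion₂.1 hy
      exact (arcBetween_subset_union p y q hpq).elim hpy (arcBetween_comm y q ▸ hqy)
    · have hyx : x ≠ y := fun h => notMem_armTo_left x p (h ▸ hy)
      by_cases hpy : x ∈ arcBetween p y
      · exact .inr (mem_iUnion₂.2 ⟨y, hpy, by simpa [arcBetween_self] using hyx⟩)
      · exact .inl hpy
  · rw [armTo_eq_of_notMem_arcBetween hy]
    exact mem_armTo fun h => hy (h ▸ right_mem_arcBetween p y)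

lemma armTo_eq_armTo_iff (hp : p ≠ x) (hq : q ≠ x) :
    armTo x p = armTo x q ↔ x ∉ arcBetween p q := by
  refine ⟨fun h => ?_, armTo_eq_of_notMem_arcBetween⟩
  have hqp : q ∈ armTo x p := h ▸ mem_armTo hq
  rwa [armTo_eq_setOf_notMem_arcBetween hp] at hqp

lemma armTo_eq_of_mem_arcBetween (hp : p ∈ arcBetween x y) (hpx : p ≠ x) :
    armTo x p = armTo x y :=
  armTo_eq_of_notMem_arcBetween fun hx =>
    hpx (eq_of_mem_arcBetween_of_mem_arcBetween hp (left_mem_arcBetween x p) hx).symm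

lemma arcBetween_subset_arm (hC : C ∈ arms x) (hp : p ∈ C) (hq : q ∈ C) : arcBetween p q ⊆ C := by
  have hne : ∀ {w}, w ∈ C → w ≠ x := fun hw h => notMem_arm hC (h ▸ hw)
  have hx : x ∉ arcBetween p q := (armTo_eq_armTo_iff (hne hp) (hne hq)).1
    ((eq_armTo_of_mem hC hp).symm.trans (eq_armTo_of_mem hC hq))
  rw [eq_armTo_of_mem hC hp]
  exact subset_armTo (isPreconnected_arcBetween p q) hx (left_mem_arcBetween p q)

/- The complement of `U` is covered by finitely many arms `armTo t u` at points `t` separating `x`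
from `u`, and arcs do not leave the arms `armTo t x`. -/
lemma exists_nhds_arcBetween_subset (hU : U ∈ 𝓝 x) :
    ∃ V ∈ 𝓝 x, ∀ a ∈ V, ∀ b ∈ V, arcBetween a b ⊆ U := by
  have hsep : ∀ u ∈ (interior U)ᶜ, ∃ t, t ≠ x ∧ t ≠ u ∧ armTo t x ≠ armTo t u := fun u hu => by
    have hxu : x ≠ u := fun h => hu (h ▸ mem_interior_iff_mem_nhds.2 hU)
    obtain ⟨t, -, ht⟩ := exists_mem_arcBetween_armTo_ne hxu
    exact ⟨t, ht⟩
  choose! t htx htu ht using hsep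
  obtain ⟨F, hF, hcover⟩ := isOpen_interior.isClosed_compl.isCompact.elim_nhds_subcover
    (fun u => armTo (t u) u) fun u hu =>
      (isOpen_armTo (arms_finite _) u).mem_nhds (mem_armTo (htu u hu).symm)
  refine ⟨⋂ u ∈ F, armTo (t u) x, (Filter.biInter_finset_mem F).2 fun u hu =>
    (isOpen_armTo (arms_finite _) x).mem_nhds (mem_armTo (htx u (hF u hu)).symm), ?_⟩
  intro a ha b hb v hv
  by_contra hvU
  obtain ⟨u, hu, hvu⟩ := mem_iUnion₂.1 (hcover fun h => hvU (interior_subset h))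
  have hvx : v ∈ armTo (t u) x := arcBetween_subset_arm (armTo_mem_arms (htx u (hF u hu)).symm)
    (mem_iInter₂.1 ha u hu) (mem_iInter₂.1 hb u hu) hv
  exact ht u (hF u hu) ((armTo_eq_of_mem hvx).symm.trans (armTo_eq_of_mem hvu))

end FiniteTree

section LocalArms

variable {X : Type*} [TopologicalSpace X]

/-- `g` is injective near `x`. This is all that is needed of a local homeomorphism onto its image
for the induced map on local arms. -/
def LocallyInjectiveAt (g : X → X) (x : X) : Prop := ∃ U ∈ 𝓝 x, InjOn g U

variable {f g : X → X} {x y s : X} {C C' D D' E : Set X}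

lemma LocallyInjectiveAt.comp (hg : LocallyInjectiveAt g (f x)) (hf : LocallyInjectiveAt f x)
    (hfc : Continuous f) : LocallyInjectiveAt (g ∘ f) x := by
  obtain ⟨U, hU, hfU⟩ := hf
  obtain ⟨V, hV, hgV⟩ := hg
  exact ⟨U ∩ f ⁻¹' V, Filter.inter_mem hU (hfc.continuousAt hV),
    hgV.comp (hfU.mono inter_subset_left) fun _ hw => hw.2⟩

lemma locallyInjectiveAt_iterate (hf : Continuous f) {k : ℕ}
    (h : ∀ j < k, LocallyInjectiveAt f (f^[j] x)) : LocallyInjectiveAt f^[k] x := by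
  induction k with
  | zero => exact ⟨univ, Filter.univ_mem, injOn_id _⟩
  | succ k ih =>
    rw [iterate_succ']
    exact (h k k.lt_succ_self).comp (ih fun j hj => h j (hj.trans k.lt_succ_self)) (hf.iterate k)

lemma mapsLocalArm_id (hC : C ∈ arms x) : MapsLocalArm id x C C :=
  ⟨hC, hC, univ, Filter.univ_mem, by simp⟩

lemma MapsLocalArm.comp (hg : MapsLocalArm g (f x) D E) (hf : MapsLocalArm f x C D)
    (hfc : Continuous f) : MapsLocalArm (g ∘ f) x C E := by
  obtain ⟨hC, -, U, hU, hCU⟩ := hf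
  obtain ⟨-, hE, V, hV, hDV⟩ := hg
  refine ⟨hC, hE, U ∩ f ⁻¹' V, Filter.inter_mem hU (hfc.continuousAt hV), ?_⟩
  rintro _ ⟨w, ⟨hwC, hwU, hwV⟩, rfl⟩
  exact hDV ⟨f w, ⟨hCU ⟨w, ⟨hwC, hwU⟩, rfl⟩, hwV⟩, rfl⟩

lemma MapsLocalArm.iterate_succ {k : ℕ} (h : MapsLocalArm f^[k] x C D)
    (h' : MapsLocalArm f (f^[k] x) D E) (hf : Continuous f) : MapsLocalArm f^[k + 1] x C E := by
  rw [Function.iterate_succ']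
  exact h'.comp h (hf.iterate k)

variable [FiniteTree X]

open FiniteTree (arms_finite)

lemma exists_mem_arm_inter {U : Set X} (hC : C ∈ arms x) (hU : U ∈ 𝓝 x) :
    ∃ y ∈ C, y ∈ U ∧ y ≠ x := by
  obtain ⟨p, hp, rfl⟩ := hC
  obtain ⟨y, hyU, hyC⟩ := mem_closure_iff_nhds.1 (mem_closure_armTo (arms_finite x) hp) U hU
  exact ⟨y, hyC, hyU, fun h => notMem_armTo_left x p (h ▸ hyC)⟩

lemma MapsLocalArm.unique (h : MapsLocalArm g x C D) (h' : MapsLocalArm g x C D') : D = D' := by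
  obtain ⟨hC, hD, U, hU, hCU⟩ := h
  obtain ⟨-, hD', U', hU', hCU'⟩ := h'
  obtain ⟨y, hyC, ⟨hyU, hyU'⟩, -⟩ := exists_mem_arm_inter hC (Filter.inter_mem hU hU')
  rw [eq_armTo_of_mem hD (hCU ⟨y, ⟨hyC, hyU⟩, rfl⟩),
    eq_armTo_of_mem hD' (hCU' ⟨y, ⟨hyC, hyU'⟩, rfl⟩)]

lemma injOn_arcBetween (hf : Continuous f)
    (h : ∀ w ∈ arcBetween x y, w ≠ y → LocallyInjectiveAt f w) : InjOn f (arcBetween x y) := by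
  obtain ⟨γ, b, hb, hγ, hinj, -, rfl, himage⟩ :=
    (isArcBetween_arcBetween x y).exists_param 0
  rw [himage] at h ⊢
  refine InjOn.image_of_comp (injOn_Icc_of_locally_injOn (hf.comp hγ) fun t ht => ?_)
  have htb : γ t ≠ γ b := fun e =>
    ht.2.ne (hinj (Ico_subset_Icc_self ht) (right_mem_Icc.2 hb) e)
  obtain ⟨U, hU, hfU⟩ := h _ (mem_image_of_mem γ (Ico_subset_Icc_self ht)) htb
  exact ⟨γ ⁻¹' U, hγ.continuousAt hU,
    hfU.comp (hinj.mono inter_subset_right) fun _ hw => hw.1⟩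

lemma armTo_map_eq_of_mem_arcBetween (hg : Continuous g) (hinj : InjOn g (arcBetween x y))
    (hs : s ∈ arcBetween x y) (hsx : s ≠ x) : armTo (g x) (g s) = armTo (g x) (g y) :=
  armTo_eq_of_mem_arcBetween (image_arcBetween hg hinj ▸ mem_image_of_mem g hs)
    (hinj.ne hs (left_mem_arcBetween x y) hsx)

lemma mapsLocalArm_of_injOn_arcBetween (hg : Continuous g) (hx : LocallyInjectiveAt g x)
    (hy : y ≠ x) (hinj : InjOn g (arcBetween x y)) :
    MapsLocalArm g x (armTo x y) (armTo (g x) (g y)) := by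
  have hgy : g y ≠ g x := hinj.ne (right_mem_arcBetween x y) (left_mem_arcBetween x y) hy
  obtain ⟨U, hU, hgU⟩ := hx
  obtain ⟨V, hV, hVU⟩ := exists_nhds_arcBetween_subset hU
  refine ⟨armTo_mem_arms hy, armTo_mem_arms hgy, V, hV, ?_⟩
  rintro _ ⟨w, ⟨hwy, hwV⟩, rfl⟩
  have hwx : w ≠ x := fun h => notMem_armTo_left x y (h ▸ hwy)
  have hinjw : InjOn g (arcBetween x w) := hgU.mono (hVU x (mem_of_mem_nhds hV) w hwV)
  obtain ⟨s, hsx, hsw, hsy⟩ := exists_ne_mem_arcBetween_inter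
    ((armTo_eq_armTo_iff hwx hy).1 (armTo_eq_of_mem hwy))
  rw [← armTo_map_eq_of_mem_arcBetween hg hinj hsy hsx,
    armTo_map_eq_of_mem_arcBetween hg hinjw hsw hsx]
  exact mem_armTo (hinjw.ne (right_mem_arcBetween x w) (left_mem_arcBetween x w) hwx)

lemma exists_mapsLocalArm (hg : Continuous g) (hx : LocallyInjectiveAt g x) (hC : C ∈ arms x) :
    ∃ D, MapsLocalArm g x C D := by
  obtain ⟨U, hU, hgU⟩ := id hx
  obtain ⟨V, hV, hVU⟩ := exists_nhds_arcBetween_subset hU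
  obtain ⟨y, hyC, hyV, hyx⟩ := exists_mem_arm_inter hC hV
  rw [eq_armTo_of_mem hC hyC]
  exact ⟨_, mapsLocalArm_of_injOn_arcBetween hg hx hyx
    (hgU.mono (hVU x (mem_of_mem_nhds hV) y hyV))⟩

lemma MapsLocalArm.injective (hg : Continuous g) (hx : LocallyInjectiveAt g x)
    (h : MapsLocalArm g x C D) (h' : MapsLocalArm g x C' D) : C = C' := by
  obtain ⟨hC, hD, W, hW, hCW⟩ := h
  obtain ⟨hC', -, W', hW', hCW'⟩ := h'
  obtain ⟨U, hU, hgU⟩ := hx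
  obtain ⟨V, hV, hVU⟩ := exists_nhds_arcBetween_subset hU
  obtain ⟨y, hyC, ⟨hyW, hyV⟩, hyx⟩ := exists_mem_arm_inter hC (Filter.inter_mem hW hV)
  obtain ⟨y', hyC', ⟨hyW', hyV'⟩, hyx'⟩ := exists_mem_arm_inter hC' (Filter.inter_mem hW' hV)
  have hgy : g y ∈ D := hCW ⟨y, ⟨hyC, hyW⟩, rfl⟩
  have hgy' : g y' ∈ D := hCW' ⟨y', ⟨hyC', hyW'⟩, rfl⟩
  have hsame : armTo (g x) (g y) = armTo (g x) (g y') := by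
    rw [← eq_armTo_of_mem hD hgy, ← eq_armTo_of_mem hD hgy']
  rw [eq_armTo_of_mem hC hyC, eq_armTo_of_mem hC' hyC', armTo_eq_armTo_iff hyx hyx']
  intro hxy
  have hne : ∀ {w}, w ∈ D → w ≠ g x := fun hw h => notMem_arm hD (h ▸ hw)
  exact (armTo_eq_armTo_iff (hne hgy) (hne hgy')).1 hsame
    (image_arcBetween hg (hgU.mono (hVU y hyV y' hyV')) ▸ mem_image_of_mem g hxy)

lemma exists_perm_arms (hg : Continuous g) (hx : LocallyInjectiveAt g x) (hfix : g x = x) :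
    ∃ σ : Equiv.Perm (arms x), ∀ (j : ℕ) (C D : arms x),
      MapsLocalArm g^[j] x C D ↔ (σ ^ j) C = D := by
  have hfinite : Finite (arms x) := arms_finite x
  choose τ hτ using fun C : arms x => exists_mapsLocalArm hg hx C.2
  let σ₀ : arms x → arms x := fun C => ⟨τ C, hfix ▸ (hτ C).2.1⟩
  have hinj : Injective σ₀ := fun C C' h => by
    have himage : τ C = τ C' := congrArg Subtype.val h
    exact Subtype.ext ((hτ C).injective hg hx (himage ▸ hτ C'))
  let σ : Equiv.Perm (arms x) := Equiv.ofBijective σ₀ (Finite.injective_iff_bijective.1 hinj)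
  have hσ : ∀ (j : ℕ) (C : arms x), MapsLocalArm g^[j] x C ((σ ^ j) C) := by
    intro j C
    induction j with
    | zero => exact mapsLocalArm_id C.2
    | succ j ih =>
      rw [pow_succ']
      exact ih.iterate_succ ((iterate_fixed hfix j).symm ▸ hτ ((σ ^ j) C)) hg
  exact ⟨σ, fun j C D => ⟨fun h => Subtype.ext ((hσ j C).unique h), fun h => h ▸ hσ j C⟩⟩

end LocalArms

section CriticalPoint

variable {X : Type*} [TopologicalSpace X] [FiniteTree X] {f : X → X} {a b c d e x : X}

open FiniteTree (arms_finite endpoint_finite)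

lemma IsEndpoint.of_map [Nontrivial X] (hf : Continuous f) (hx : LocallyInjectiveAt f x)
    (h : IsEndpoint (f x)) : IsEndpoint x := by
  obtain ⟨y, hy⟩ := exists_ne x
  refine isEndpoint_of_forall_eq (armTo_mem_arms hy) fun C hC => ?_
  obtain ⟨D, hD⟩ := exists_mapsLocalArm hf hx hC
  obtain ⟨D', hD'⟩ := exists_mapsLocalArm hf hx (armTo_mem_arms hy)
  exact hD.injective hf hx (h.arm_unique hD'.2.1 hD.2.1 ▸ hD')

lemma preimage_eq_of_preimage_subset {α : Type*} {g : α → α} {E : Set α} (hg : Surjective g)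
    (hE : E.Finite) (h : g ⁻¹' E ⊆ E) : g ⁻¹' E = E := by
  refine eq_of_subset_of_ncard_le h ?_ hE
  conv_lhs => rw [← image_preimage_eq E hg]
  exact ncard_image_le (hE.subset h)

/- If `f c` were not an endpoint, the finite set of endpoints would be backward invariant, hence
invariant; but it contains `c`, as every endpoint is on the orbit of `c`. -/
lemma isEndpoint_critical_value [Nontrivial X] (hf : Continuous f) (hsurj : Surjective f)
    (hloc : ∀ x, x ≠ c → LocallyInjectiveAt f x)
    (horbit : ∀ e, IsEndpoint e → ∃ k : ℕ, f^[k] c = e) : IsEndpoint (f c) := by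
  by_contra hfc
  have hback : ∀ x, IsEndpoint (f x) → IsEndpoint x := fun x hx =>
    hx.of_map hf (hloc x fun h => hfc (h ▸ hx))
  have hback_iterate : ∀ k x, IsEndpoint (f^[k] x) → IsEndpoint x := fun k => by
    induction k with
    | zero => exact fun _ h => h
    | succ k ih => exact fun x h => hback x (ih _ h)
  obtain ⟨y, hy⟩ := exists_ne c
  obtain ⟨e, -, he⟩ := exists_isEndpoint_mem_arm arms_finite (armTo_mem_arms hy)
  obtain ⟨k, rfl⟩ := horbit e he
  have hinvariant := preimage_eq_of_preimage_subset hsurj endpoint_finite hback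
  exact hfc (hinvariant.ge (hback_iterate k c he))

lemma IsEndpoint.notMem_arcBetween (he : IsEndpoint e) (ha : a ≠ e) (hb : b ≠ e) :
    e ∉ arcBetween a b :=
  (armTo_eq_armTo_iff ha hb).1 (he.arm_unique (armTo_mem_arms ha) (armTo_mem_arms hb))

lemma IsEndpoint.exists_ne_mem_arcBetween_inter (he : IsEndpoint e) (ha : a ≠ e) (hb : b ≠ e)
    (hd : d ≠ e) :
    ∃ w, w ≠ e ∧ w ∈ arcBetween e a ∧ w ∈ arcBetween e b ∧ w ∈ arcBetween e d := by
  obtain ⟨s, hs, hsa, hsb⟩ :=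
    HubbardTrees.exists_ne_mem_arcBetween_inter (he.notMem_arcBetween ha hb)
  obtain ⟨w, hw, hws, hwd⟩ :=
    HubbardTrees.exists_ne_mem_arcBetween_inter (he.notMem_arcBetween hs hd)
  exact ⟨w, hw, arcBetween_subset_left hsa hws, arcBetween_subset_left hsb hws, hwd⟩

/- Near `c` all the arms are folded onto the unique arm at `f c`, so three distinct arms would
produce three preimages of a single point. -/
lemma armTo_eq_or_of_isEndpoint_map (hf : Continuous f)
    (hloc : ∀ x, x ≠ c → LocallyInjectiveAt f x) (hfib : ∀ y, ∃ u v, f ⁻¹' {y} ⊆ {u, v})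
    (hfc : IsEndpoint (f c)) (ha : a ≠ c) (hb : b ≠ c) (hd : d ≠ c) :
    armTo c a = armTo c b ∨ armTo c b = armTo c d ∨ armTo c a = armTo c d := by
  have hinj : ∀ y, InjOn f (arcBetween c y) := fun y =>
    arcBetween_comm y c ▸ injOn_arcBetween hf fun w _ hw => hloc w hw
  have hne : ∀ {y}, y ≠ c → f y ≠ f c := fun {y} hy =>
    (hinj y).ne (right_mem_arcBetween c y) (left_mem_arcBetween c y) hy
  obtain ⟨w, hw, hwa, hwb, hwd⟩ := hfc.exists_ne_mem_arcBetween_inter (hne ha) (hne hb) (hne hd)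
  have hlift : ∀ {y}, w ∈ arcBetween (f c) (f y) → ∃ p, f p = w ∧ armTo c p = armTo c y := by
    intro y hy
    obtain ⟨p, hp, rfl⟩ := image_arcBetween hf (hinj y) ▸ hy
    exact ⟨p, rfl, armTo_eq_of_mem_arcBetween hp fun h => hw (h ▸ rfl)⟩
  obtain ⟨p, hp, hpa⟩ := hlift hwa
  obtain ⟨q, hq, hqb⟩ := hlift hwb
  obtain ⟨r, hr, hrd⟩ := hlift hwd
  obtain ⟨u, v, huv⟩ := hfib w
  rw [← hpa, ← hqb, ← hrd]
  obtain rfl | rfl := huv hp <;> obtain rfl | rfl := huv hq <;> obtain rfl | rfl := huv hr <;> simp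

end CriticalPoint

section InternalAddress

variable {ν : ℕ → Sym} {k m r : ℕ}

lemma rho_eq_coe_iff : rho ν m = (r : ℕ∞) ↔
    (m < r ∧ ν r ≠ ν (r - m)) ∧ ∀ j, m < j → j < r → ν j = ν (j - m) := by
  set S : Set ℕ∞ := {e | ∃ j : ℕ, e = (j : ℕ∞) ∧ m < j ∧ ν j ≠ ν (j - m)}
  have hrho : rho ν m = sInf S := rfl
  constructor
  · intro h
    have hne : S.Nonempty := by
      by_contra hempty
      rw [hrho, not_nonempty_iff_eq_empty.1 hempty, sInf_empty] at h
      exact ENat.top_ne_natCast r h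
    have hmem : (r : ℕ∞) ∈ S := h ▸ csInf_mem hne
    refine ⟨?_, fun j hmj hjr => ?_⟩
    · obtain ⟨j, hj, hmj⟩ := hmem
      obtain rfl := Nat.cast_injective hj
      exact hmj
    · by_contra hj
      have hle : (r : ℕ∞) ≤ j := h ▸ sInf_le ⟨j, rfl, hmj, hj⟩
      exact hjr.not_ge (Nat.cast_le.1 hle)
  · rintro ⟨⟨hmr, hr⟩, hlt⟩
    refine IsLeast.csInf_eq ⟨⟨r, rfl, hmr, hr⟩, ?_⟩
    rintro _ ⟨j, rfl, hmj, hj⟩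
    by_contra hjr
    exact hj (hlt j hmj (Nat.cast_lt.1 (not_le.1 hjr)))

lemma RhoOrbit.le (h : RhoOrbit ν k m) : k ≤ m := by
  induction h with
  | refl => exact le_rfl
  | step _ hrho ih => exact ih.trans (rho_eq_coe_iff.1 hrho).1.1.le

lemma exists_internalAddress_le (hk : 1 ≤ k) :
    ∃ m ≤ k, InternalAddress ν m ∧ ∀ j, m < j → j ≤ k → ν j = ν (j - m) := by
  induction k, hk using Nat.le_induction with
  | base => exact ⟨1, le_rfl, .refl 1, fun j h h' => by omega⟩
  | succ k _ ih =>
    obtain ⟨m, hmk, hm, hagree⟩ := ih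
    by_cases hsucc : ν (k + 1) = ν (k + 1 - m)
    · refine ⟨m, by omega, hm, fun j hmj hjk => ?_⟩
      obtain rfl | hjk := hjk.eq_or_lt
      · exact hsucc
      · exact hagree j hmj (by omega)
    · have hrho : rho ν m = ((k + 1 : ℕ) : ℕ∞) :=
        rho_eq_coe_iff.2 ⟨⟨by omega, hsucc⟩, fun j hmj hjk => hagree j hmj (by omega)⟩
      exact ⟨k + 1, le_rfl, RhoOrbit.step hm hrho, fun j h h' => by omega⟩

end InternalAddress

namespace HubbardTree

variable {X : Type*} [TopologicalSpace X]

lemma finiteTree (H : HubbardTree X) : FiniteTree X where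
  toCompactSpace := H.compact
  toT2Space := H.t2
  existsUnique_arc x y := ⟨H.arc x y, H.arc_isArc x y, H.arc_unique x y⟩
  arms_finite := H.arms_finite
  endpoint_finite := H.endpoint_finite

variable (H : HubbardTree X) {x y z : X} {C : Set X} {k m n : ℕ}

lemma locallyInjectiveAt (hx : x ≠ H.c0) : LocallyInjectiveAt H.f x := by
  obtain ⟨U, hU, hxU, hemb⟩ := H.local_homeo x hx
  exact ⟨U, hU.mem_nhds hxU, injOn_iff_injective.2 hemb.injective⟩

lemma isEndpoint_c1 : IsEndpoint H.c1 := by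
  have := H.finiteTree
  have : Nontrivial X := ⟨_, _, H.crit_not_fixed⟩
  exact isEndpoint_critical_value H.cont H.surj (fun _ => H.locallyInjectiveAt)
    H.endpoints_on_orbit

lemma symOf_eq_symOf_iff (hx : x ≠ H.c0) (hy : y ≠ H.c0) :
    H.symOf x = H.symOf y ↔ armTo H.c0 x = armTo H.c0 y := by
  have := H.finiteTree
  have hT1 : ∀ {w}, w ≠ H.c0 → (w ∈ H.T1 ↔ armTo H.c0 w = armTo H.c0 H.c1) := fun hw =>
    ⟨armTo_eq_of_mem, fun h => (h ▸ mem_armTo hw : _ ∈ armTo H.c0 H.c1)⟩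
  have harms := armTo_eq_or_of_isEndpoint_map H.cont (fun _ => H.locallyInjectiveAt)
    H.two_preimages H.isEndpoint_c1 hx H.crit_not_fixed hy
  simp only [symOf, if_neg hx, if_neg hy, hT1 hx, hT1 hy]
  change _ = armTo H.c0 H.c1 ∨ armTo H.c0 H.c1 = _ ∨ _ at harms
  split_ifs with hx1 hy1 hy1
  · simp [hx1, hy1]
  · simp [hx1, Ne.symm hy1]
  · simp [hx1, hy1]
  · simpa [hx1, Ne.symm hy1] using harms

lemma mapsLocalArm_armTo_c0 (hx : x ≠ H.c0) :
    MapsLocalArm H.f x (armTo x H.c0) (armTo (H.f x) H.c1) := by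
  have := H.finiteTree
  exact mapsLocalArm_of_injOn_arcBetween H.cont (H.locallyInjectiveAt hx) hx.symm
    (injOn_arcBetween H.cont fun _ _ => H.locallyInjectiveAt)

lemma mapsLocalArm_of_symOf_eq (hx : x ≠ H.c0) (hy : y ≠ H.c0) (hyx : y ≠ x)
    (h : H.symOf x = H.symOf y) : MapsLocalArm H.f x (armTo x y) (armTo (H.f x) (H.f y)) := by
  have := H.finiteTree
  have hc0 : H.c0 ∉ arcBetween x y :=
    (armTo_eq_armTo_iff hx hy).1 ((H.symOf_eq_symOf_iff hx hy).1 h)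
  exact mapsLocalArm_of_injOn_arcBetween H.cont (H.locallyInjectiveAt hx) hyx
    (injOn_arcBetween H.cont fun w hw _ => H.locallyInjectiveAt fun h => hc0 (h ▸ hw))

lemma mapsLocalArm_of_symOf_ne (hx : x ≠ H.c0) (hy : y ≠ H.c0) (h : H.symOf x ≠ H.symOf y) :
    MapsLocalArm H.f x (armTo x y) (armTo (H.f x) H.c1) := by
  have := H.finiteTree
  have hc0 : H.c0 ∈ arcBetween x y := by
    rwa [← not_not (a := _ ∈ _), ← armTo_eq_armTo_iff hx hy, ← H.symOf_eq_symOf_iff hx hy]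
  exact armTo_eq_of_mem_arcBetween hc0 hx.symm ▸ H.mapsLocalArm_armTo_c0 hx

namespace IsCharacteristic

variable {H}

lemma c0_ne (hz : H.IsCharacteristic z) : H.c0 ≠ z := by
  obtain ⟨-, Cz, -, hCz, -, -, hc0, -⟩ := hz
  exact fun h => notMem_arm hCz (h ▸ hc0)

lemma c1_ne (hz : H.IsCharacteristic z) : H.c1 ≠ z := by
  obtain ⟨Cv, -, hCv, -, -, hc1, -⟩ := hz
  exact fun h => notMem_arm hCv (h ▸ hc1)

lemma armTo_c0_ne_armTo_c1 (hz : H.IsCharacteristic z) : armTo z H.c0 ≠ armTo z H.c1 := by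
  obtain ⟨Cv, Cz, hCv, hCz, hne, hc1, hc0, -⟩ := hz
  rw [← eq_armTo_of_mem hCz hc0, ← eq_armTo_of_mem hCv hc1]
  exact hne.symm

lemma armTo_iterate (hz : H.IsCharacteristic z) (hk : H.f^[k] z ≠ z) :
    armTo z (H.f^[k] z) = armTo z H.c0 := by
  obtain ⟨-, Cz, -, hCz, -, -, hc0, horbit⟩ := hz
  rw [← eq_armTo_of_mem hCz hc0, ← eq_armTo_of_mem hCz (horbit k hk)]

lemma iterate_ne_c0 (hz : H.IsCharacteristic z) (k : ℕ) : H.f^[k] z ≠ H.c0 := by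
  intro hk
  have hc1 : H.f^[k + 1] z = H.c1 := by rw [iterate_succ_apply', hk]; rfl
  exact hz.armTo_c0_ne_armTo_c1 (hc1 ▸ hz.armTo_iterate (hc1 ▸ hz.c1_ne)).symm

lemma locallyInjectiveAt_iterate (hz : H.IsCharacteristic z) (k : ℕ) :
    LocallyInjectiveAt H.f^[k] z :=
  HubbardTrees.locallyInjectiveAt_iterate H.cont fun j _ =>
    H.locallyInjectiveAt (hz.iterate_ne_c0 j)

lemma armTo_iterate_c1 (hz : H.IsCharacteristic z) (hk : H.f^[k] z ≠ z) :
    armTo (H.f^[k] z) H.c1 = armTo (H.f^[k] z) z := by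
  have := H.finiteTree
  have hmem : z ∈ arcBetween (H.f^[k] z) H.c1 := by
    by_contra hnot
    exact hz.armTo_c0_ne_armTo_c1
      ((hz.armTo_iterate hk).symm.trans (armTo_eq_of_notMem_arcBetween hnot))
  exact (armTo_eq_of_mem_arcBetween hmem hk.symm).symm

lemma mapsLocalArm_iterate_of_itin_eq (hz : H.IsCharacteristic z) (hm : H.f^[m] z ≠ z)
    (hmaps : MapsLocalArm H.f^[m] z C (armTo (H.f^[m] z) H.c1)) (hmk : m ≤ k)
    (hitin : ∀ j, m < j → j ≤ k → H.itin z j = H.itin z (j - m)) :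
    MapsLocalArm H.f^[k] z C (armTo (H.f^[k] z) (H.f^[k - m] z)) := by
  induction k, hmk using Nat.le_induction with
  | base => simpa [hz.armTo_iterate_c1 hm] using hmaps
  | succ k hmk ih =>
    have hmaps_k := ih fun j hmj hjk => hitin j hmj (hjk.trans k.le_succ)
    have hsym : H.symOf (H.f^[k] z) = H.symOf (H.f^[k - m] z) := by
      simpa [itin, Nat.succ_sub hmk] using hitin (k + 1) (by omega) le_rfl
    rw [Nat.succ_sub hmk, iterate_succ_apply', iterate_succ_apply']
    exact hmaps_k.iterate_succ (H.mapsLocalArm_of_symOf_eq (hz.iterate_ne_c0 k)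
      (hz.iterate_ne_c0 (k - m)) (ne_of_armTo_mem_arms hmaps_k.2.1) hsym) H.cont

lemma mapsLocalArm_armTo_c1_of_internalAddress (hz : H.IsCharacteristic z)
    (hper : ExactPeriod H.f z n) (hm : InternalAddress (H.itin z) m) (hmn : m ≤ n) :
    MapsLocalArm H.f^[m] z (armTo z H.c0) (armTo (H.f^[m] z) H.c1) := by
  induction hm with
  | refl => exact H.mapsLocalArm_armTo_c0 (hz.iterate_ne_c0 0)
  | @step m r hm hrho ih =>
    obtain ⟨⟨hmr, hdiffer⟩, hagree⟩ := rho_eq_coe_iff.1 hrho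
    obtain ⟨k, rfl⟩ : ∃ k, r = k + 1 := ⟨r - 1, by omega⟩
    have hmk : m ≤ k := Nat.lt_succ_iff.1 hmr
    have hmaps_k := hz.mapsLocalArm_iterate_of_itin_eq
      (hper.2.2 m hm.le (by omega)) (ih (by omega)) hmk
      fun j hmj hjk => hagree j hmj (Nat.lt_succ_of_le hjk)
    have hsym : H.symOf (H.f^[k] z) ≠ H.symOf (H.f^[k - m] z) := by
      simpa [itin, Nat.succ_sub hmk] using hdiffer
    rw [iterate_succ_apply']
    exact hmaps_k.iterate_succ (H.mapsLocalArm_of_symOf_ne (hz.iterate_ne_c0 k)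
      (hz.iterate_ne_c0 (k - m)) hsym) H.cont

lemma mapsLocalArm_armTo_c0_of_not_internalAddress (hz : H.IsCharacteristic z)
    (hper : ExactPeriod H.f z n) (hn : ¬ InternalAddress (H.itin z) n) :
    MapsLocalArm H.f^[n] z (armTo z H.c0) (armTo z H.c0) := by
  obtain ⟨m, hmn, hm, hitin⟩ := exists_internalAddress_le (ν := H.itin z) hper.1
  have hlt : m < n := hmn.lt_of_ne fun h => hn (h ▸ hm)
  have hmaps := hz.mapsLocalArm_iterate_of_itin_eq (hper.2.2 m hm.le hlt)
    (hz.mapsLocalArm_armTo_c1_of_internalAddress hper hm hmn) hmn hitin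
  rwa [hper.2.1, hz.armTo_iterate (hper.2.2 _ (by omega) (Nat.sub_lt hper.1 hm.le))] at hmaps

end IsCharacteristic

end HubbardTree

lemma ExactPeriod.iterate_eq_self_iff {α : Type*} {g : α → α} {z : α} {n k : ℕ}
    (h : ExactPeriod g z n) : g^[k] z = z ↔ n ∣ k := by
  have hn : IsPeriodicPt g n z := h.2.1
  refine ⟨fun hk => ?_, fun hdvd => hn.trans_dvd hdvd⟩
  by_contra hdvd
  exact h.2.2 (k % n) (Nat.pos_of_ne_zero fun h0 => hdvd (Nat.dvd_of_mod_eq_zero h0))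
    (Nat.mod_lt k h.1) (hn.iterate_mod_apply k ▸ hk)

namespace HubbardTree.IsCharacteristic

variable {X : Type*} [TopologicalSpace X] {H : HubbardTree X} {z : X} {C : Set X} {k m n : ℕ}

lemma eq_armTo_of_not_isBranchPt (hz : H.IsCharacteristic z) (hb : ¬ IsBranchPt z)
    (hC : C ∈ arms z) : C = armTo z H.c0 ∨ C = armTo z H.c1 := by
  by_contra! hne
  have hthree : ({C, armTo z H.c0, armTo z H.c1} : Set (Set X)).ncard = 3 :=
    ncard_eq_three.2 ⟨_, _, _, hne.1, hne.2, hz.armTo_c0_ne_armTo_c1, rfl⟩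
  refine hb (hthree.ge.trans (ncard_le_ncard ?_ (H.arms_finite z)))
  rintro D (rfl | rfl | rfl)
  exacts [hC, armTo_mem_arms hz.c0_ne, armTo_mem_arms hz.c1_ne]

/- By expansivity some iterate of the arc from `z` to an endpoint in `C` runs through `c₀`; at the
first such time the arm is mapped to the arm towards `c₀`, and then towards `c₁`. -/
lemma exists_mapsLocalArm_armTo_c1_of_isBranchPt (hz : H.IsCharacteristic z) (hb : IsBranchPt z)
    (hC : C ∈ arms z) : ∃ k, MapsLocalArm H.f^[k] z C (armTo (H.f^[k] z) H.c1) := by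
  classical
  have := H.finiteTree
  obtain ⟨e, heC, he⟩ := exists_isEndpoint_mem_arm H.arms_finite hC
  have hez : e ≠ z := fun h => notMem_arm hC (h ▸ heC)
  have hexp := H.expansive z e hez.symm (.inl hb) (.inr (H.endpoints_on_orbit e he))
  rw [(H.arc_isArc z e).eq_arcBetween] at hexp
  have hinj : InjOn H.f^[Nat.find hexp] (arcBetween z e) :=
    injOn_arcBetween (H.cont.iterate _) fun w hw _ =>
      HubbardTrees.locallyInjectiveAt_iterate H.cont fun j hj =>
        H.locallyInjectiveAt fun h => Nat.find_min hexp hj ⟨w, hw, h⟩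
  have hmaps := mapsLocalArm_of_injOn_arcBetween (H.cont.iterate _)
    (hz.locallyInjectiveAt_iterate _) hez hinj
  have hc0 := Nat.find_spec hexp
  rw [image_arcBetween (H.cont.iterate _) hinj] at hc0
  rw [← eq_armTo_of_mem hC heC,
    ← armTo_eq_of_mem_arcBetween hc0 (hz.iterate_ne_c0 _).symm] at hmaps
  refine ⟨Nat.find hexp + 1, ?_⟩
  rw [iterate_succ_apply']
  exact hmaps.iterate_succ (H.mapsLocalArm_armTo_c0 (hz.iterate_ne_c0 _)) H.cont

lemma exists_mapsLocalArm_armTo_c1 (hz : H.IsCharacteristic z) (hC : C ∈ arms z) :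
    ∃ k, MapsLocalArm H.f^[k] z C (armTo (H.f^[k] z) H.c1) := by
  by_cases hb : IsBranchPt z
  · exact hz.exists_mapsLocalArm_armTo_c1_of_isBranchPt hb hC
  · obtain rfl | rfl := hz.eq_armTo_of_not_isBranchPt hb hC
    · exact ⟨1, H.mapsLocalArm_armTo_c0 (hz.iterate_ne_c0 0)⟩
    · exact ⟨0, mapsLocalArm_id hC⟩

lemma exists_mapsLocalArm_armTo_iterate (hz : H.IsCharacteristic z) (hper : ExactPeriod H.f z n)
    (hnever : ∀ j, ¬ MapsLocalArm H.f^[n * j] z C (armTo z H.c1))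
    (hk : MapsLocalArm H.f^[k] z C (armTo (H.f^[k] z) H.c1)) (hkm : k ≤ m) :
    ∃ j, MapsLocalArm H.f^[m] z C (armTo (H.f^[m] z) (H.f^[j] z)) := by
  have hc1 : ∀ {i}, MapsLocalArm H.f^[i] z C (armTo (H.f^[i] z) H.c1) →
      MapsLocalArm H.f^[i] z C (armTo (H.f^[i] z) z) := fun {i} hi => by
    have hne : H.f^[i] z ≠ z := fun h => by
      obtain ⟨j, rfl⟩ := hper.iterate_eq_self_iff.1 h
      rw [h] at hi
      exact hnever j hi
    exact hz.armTo_iterate_c1 hne ▸ hi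
  induction m, hkm using Nat.le_induction with
  | base => exact ⟨0, hc1 hk⟩
  | succ m _ ih =>
    obtain ⟨j, hj⟩ := ih
    by_cases hsym : H.symOf (H.f^[m] z) = H.symOf (H.f^[j] z)
    · refine ⟨j + 1, ?_⟩
      rw [iterate_succ_apply', iterate_succ_apply']
      exact hj.iterate_succ (H.mapsLocalArm_of_symOf_eq (hz.iterate_ne_c0 m) (hz.iterate_ne_c0 j)
        (ne_of_armTo_mem_arms hj.2.1) hsym) H.cont
    · refine ⟨0, hc1 ?_⟩
      rw [iterate_succ_apply']
      exact hj.iterate_succ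
        (H.mapsLocalArm_of_symOf_ne (hz.iterate_ne_c0 m) (hz.iterate_ne_c0 j) hsym) H.cont

lemma exists_mapsLocalArm_armTo_c0_or_c1 (hz : H.IsCharacteristic z) (hper : ExactPeriod H.f z n)
    (hC : C ∈ arms z) : ∃ j, MapsLocalArm H.f^[n * j] z C (armTo z H.c0) ∨
      MapsLocalArm H.f^[n * j] z C (armTo z H.c1) := by
  by_contra! hnever
  obtain ⟨k, hk⟩ := hz.exists_mapsLocalArm_armTo_c1 hC
  obtain ⟨j, hj⟩ := hz.exists_mapsLocalArm_armTo_iterate hper (fun i => (hnever i).2) hk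
    (Nat.le_mul_of_pos_left k hper.1)
  have hne := ne_of_armTo_mem_arms hj.2.1
  rw [hper.iterate_eq_self_iff.2 (dvd_mul_right n k)] at hj hne
  exact (hnever k).1 (hz.armTo_iterate hne ▸ hj)

lemma exists_perm_arms (hz : H.IsCharacteristic z) (hper : ExactPeriod H.f z n) :
    ∃ σ : Equiv.Perm (arms z), (∀ C D : arms z, MapsLocalArm H.f^[n] z C D ↔ σ C = D) ∧
      ∀ C D : arms z, (∃ j, MapsLocalArm H.f^[n * j] z C D) ↔ σ.SameCycle C D := by
  have := H.finiteTree
  have hfinite : Finite (arms z) := H.arms_finite z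
  obtain ⟨σ, hσ⟩ := HubbardTrees.exists_perm_arms (H.cont.iterate n)
    (hz.locallyInjectiveAt_iterate n) hper.2.1
  refine ⟨σ, hσ 1, fun C D => ?_⟩
  simp only [iterate_mul, hσ]
  exact ⟨fun ⟨j, hj⟩ => ⟨j, hj⟩, fun h => h.exists_nat_pow_eq⟩

/-- The arm at a characteristic point towards the critical point, as an element of the set of arms
on which the first return map acts. -/
def armC0 (hz : H.IsCharacteristic z) : arms z := ⟨armTo z H.c0, armTo_mem_arms hz.c0_ne⟩

/-- The arm at a characteristic point towards the critical value, as an element of the set of arms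
on which the first return map acts. -/
def armC1 (hz : H.IsCharacteristic z) : arms z := ⟨armTo z H.c1, armTo_mem_arms hz.c1_ne⟩

lemma sameCycle_armC0_or_armC1 (hz : H.IsCharacteristic z) (hper : ExactPeriod H.f z n)
    {σ : Equiv.Perm (arms z)}
    (hσ : ∀ C D : arms z, (∃ j, MapsLocalArm H.f^[n * j] z C D) ↔ σ.SameCycle C D)
    (C : arms z) : σ.SameCycle C hz.armC0 ∨ σ.SameCycle C hz.armC1 := by
  obtain ⟨j, hj⟩ := hz.exists_mapsLocalArm_armTo_c0_or_c1 hper C.2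
  exact hj.imp (fun h => (hσ C hz.armC0).1 ⟨j, h⟩) fun h => (hσ C hz.armC1).1 ⟨j, h⟩

lemma armsTransitive_of_mapsLocalArm (hz : H.IsCharacteristic z) (hper : ExactPeriod H.f z n)
    (h : MapsLocalArm H.f^[n] z (armTo z H.c0) (armTo z H.c1)) : ArmsTransitive H.f n z := by
  obtain ⟨σ, hone, hσ⟩ := hz.exists_perm_arms hper
  have hc0c1 : σ hz.armC0 = hz.armC1 := (hone _ _).1 h
  have hall : ∀ C, σ.SameCycle C hz.armC1 := fun C =>
    (hz.sameCycle_armC0_or_armC1 hper hσ C).elim (fun h => hc0c1 ▸ h.apply_right) id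
  exact fun C hC D hD => (hσ ⟨C, hC⟩ ⟨D, hD⟩).2 ((hall _).trans (hall _).symm)

lemma otherArmsTransitive_of_mapsLocalArm (hz : H.IsCharacteristic z) (hper : ExactPeriod H.f z n)
    (h : MapsLocalArm H.f^[n] z (armTo z H.c0) (armTo z H.c0)) : H.OtherArmsTransitive n z := by
  obtain ⟨σ, hone, hσ⟩ := hz.exists_perm_arms hper
  have hfixed : σ hz.armC0 = hz.armC0 := (hone _ _).1 h
  have hall : ∀ C : arms z, (C : Set X) ≠ armTo z H.c0 → σ.SameCycle C hz.armC1 := fun C hC =>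
    (hz.sameCycle_armC0_or_armC1 hper hσ C).resolve_left fun h =>
      hC (congrArg Subtype.val (h.eq_of_right hfixed))
  exact fun C hC hne D hD hne' =>
    (hσ ⟨C, hC⟩ ⟨D, hD⟩).2 ((hall _ hne).trans (hall _ hne').symm)

lemma not_armsTransitive_of_mapsLocalArm (hz : H.IsCharacteristic z) (hper : ExactPeriod H.f z n)
    (h : MapsLocalArm H.f^[n] z (armTo z H.c0) (armTo z H.c0)) : ¬ ArmsTransitive H.f n z := by
  obtain ⟨σ, hone, hσ⟩ := hz.exists_perm_arms hper
  have hfixed : σ hz.armC0 = hz.armC0 := (hone _ _).1 h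
  intro htrans
  have hcycle := (hσ hz.armC0 hz.armC1).1 (htrans _ hz.armC0.2 _ hz.armC1.2)
  exact hz.armTo_c0_ne_armTo_c1 (congrArg Subtype.val (hcycle.eq_of_left hfixed))

end HubbardTree.IsCharacteristic

/-- Proposition 4.2, "Type of Characteristic Point".
Let `z` be a characteristic periodic point with itinerary `τ` and exact period `n`.
If `n` occurs in the internal address of `τ`, the first return map sends the local
arm towards `c₀` to the local arm towards `c₁` and permutes all local arms
transitively; if `n` does not occur, the first return map fixes the local arm
towards `c₀` and permutes all other local arms transitively. In particular, a
characteristic periodic branch point of period `n` is evil iff the internal address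
of its itinerary does not contain `n`. -/
theorem type_of_characteristic_point
    {X : Type*} [TopologicalSpace X] (H : HubbardTree X) (z : X) (n : ℕ)
    (hchar : H.IsCharacteristic z) (hper : ExactPeriod H.f z n) :
    (InternalAddress (H.itin z) n →
      MapsLocalArm (H.f^[n]) z (armTo z H.c0) (armTo z H.c1) ∧
      ArmsTransitive H.f n z) ∧
    (¬ InternalAddress (H.itin z) n →
      MapsLocalArm (H.f^[n]) z (armTo z H.c0) (armTo z H.c0) ∧
      H.OtherArmsTransitive n z) ∧
    (IsBranchPt z →
      (¬ ArmsTransitive H.f n z ↔ ¬ InternalAddress (H.itin z) n)) := by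
  by_cases hn : InternalAddress (H.itin z) n
  · have hmaps : MapsLocalArm H.f^[n] z (armTo z H.c0) (armTo z H.c1) := by
      simpa only [hper.2.1] using hchar.mapsLocalArm_armTo_c1_of_internalAddress hper hn le_rfl
    have htrans := hchar.armsTransitive_of_mapsLocalArm hper hmaps
    exact ⟨fun _ => ⟨hmaps, htrans⟩, absurd hn, fun _ => iff_of_false (not_not.2 htrans)
      (not_not.2 hn)⟩
  · have hmaps := hchar.mapsLocalArm_armTo_c0_of_not_internalAddress hper hn
    exact ⟨fun h => absurd h hn,
      fun _ => ⟨hmaps, hchar.otherArmsTransitive_of_mapsLocalArm hper hmaps⟩,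
      fun _ => iff_of_true (hchar.not_armsTransitive_of_mapsLocalArm hper hmaps) hn⟩

end HubbardTrees
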